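/- Let m be a positive integer, let a and b be complex constants, and let g = (g₁,g₂) ∈ 𝒪(ℂ²,0,0) be given by g₁(x₁,x₂) = x₁^m(a + o(1)) + x₂·O(1) and g₂(x₁,x₂) = x₂(b + o(1)) + x₁^m·o(1). If the origin is an isolated zero of g, then π_g(0) ≥ m. If a ≠ 0 and b ≠ 0, then the origin is an isolated zero of g and π_g(0) = m. -/

import Mathlib

open Metric Set Filter Topology Polynomial Asymptotics
open scoped Classical

noncomputable section

namespace ZhangPaper

/-- `ℂⁿ`. -/
abbrev Cn (n : ℕ) := Fin n → ℂ

variable {n : ℕ}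

/-- A germ in `𝒪(ℂⁿ,0,0)`: holomorphic near `0` and fixing the origin. -/
def IsGerm (f : Cn n → Cn n) : Prop := AnalyticAt ℂ f 0 ∧ f 0 = 0

/-- `q` is a regular value of `h` on `s`. -/
def IsRegularValueOn (h : Cn n → Cn n) (s : Set (Cn n)) (q : Cn n) : Prop :=
  ∀ x ∈ s, h x = q → Function.Bijective (fderiv ℂ h x)

/-- `m` is the zero order (multiplicity) of `h` at the isolated zero `p`:
the number of solutions of `h x = q` near `p`, for any regular value `q`
with `‖q‖` sufficiently small. -/
def HasZeroOrder (h : Cn n → Cn n) (p : Cn n) (m : ℕ) : Prop :=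
  ∃ r > 0, AnalyticOnNhd ℂ h (closedBall p r) ∧ h p = 0 ∧
    (∀ x ∈ closedBall p r, h x = 0 → x = p) ∧
    (∀ ε > 0, ∃ q : Cn n, ‖q‖ < ε ∧ IsRegularValueOn h (ball p r) q) ∧
    ∃ δ > 0, ∀ q : Cn n, ‖q‖ < δ → IsRegularValueOn h (ball p r) q →
      {x ∈ ball p r | h x = q}.ncard = m

/-- The zero order `π_h(p)` of `h` at `p`. -/
def zeroOrder (h : Cn n → Cn n) (p : Cn n) : ℕ := sInf {m | HasZeroOrder h p m}

/-- The fixed point index `μ_g(p)` of `g` at `p`. -/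
def fixedPointIndex (g : Cn n → Cn n) (p : Cn n) : ℕ :=
  zeroOrder (fun x => x - g x) p

/-- The local Dold index `P_M(f,0)`. -/
def doldIndex (f : Cn n → Cn n) (M : ℕ) : ℤ :=
  ∑ τ ∈ M.primeFactors.powerset,
    (-1 : ℤ) ^ τ.card * (fixedPointIndex (f^[M / (∏ p ∈ τ, p)]) 0 : ℤ)

/-- `x` is a periodic point of exact period `M` for `g`. -/
def ExactPeriodicPt (g : Cn n → Cn n) (M : ℕ) (x : Cn n) : Prop :=
  g^[M] x = x ∧ ∀ j, 0 < j → j < M → g^[j] x ≠ x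

/-- `g` has at least `m` distinct periodic orbits of period `M` inside `B`. -/
def AtLeastOrbits (g : Cn n → Cn n) (M m : ℕ) (B : Set (Cn n)) : Prop :=
  ∃ p : Fin m → Cn n,
    (∀ i, ExactPeriodicPt g M (p i) ∧ ∀ j < M, g^[j] (p i) ∈ B) ∧
    ∀ i j : Fin m, i ≠ j → ∀ l < M, g^[l] (p i) ≠ p j

/-- `g` has exactly `m` distinct periodic orbits of period `M` inside `B`. -/
def ExactlyOrbits (g : Cn n → Cn n) (M m : ℕ) (B : Set (Cn n)) : Prop :=
  AtLeastOrbits g M m B ∧ ¬ AtLeastOrbits g M (m + 1) B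

/-- The number `𝒪_M(f,0)` of periodic orbits of period `M` of `f` hidden at the
fixed point `0`: the largest `m` such that there is a ball `B` centered at `0` in which
`0` is the only fixed point of `f^M`, and a sequence of holomorphic maps fixing `0`
converging to `f` uniformly on `B`, each having `m` distinct periodic orbits of
period `M` in `B`. -/
def hiddenOrbits (f : Cn n → Cn n) (M : ℕ) : ℕ :=
  sSup {m | ∃ r > 0,
    (∀ x ∈ closedBall (0 : Cn n) r, f^[M] x = x → x = 0) ∧
    ∃ fk : ℕ → Cn n → Cn n,
      (∀ k, AnalyticOnNhd ℂ (fk k) (ball (0 : Cn n) r) ∧ fk k 0 = 0) ∧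
      TendstoUniformlyOn fk f atTop (ball (0 : Cn n) r) ∧
      ∀ k, AtLeastOrbits (fk k) M m (ball (0 : Cn n) r)}

/-- `0` is an isolated fixed point of `g`. -/
def IsolatedFixedPtAt0 (g : Cn n → Cn n) : Prop :=
  g 0 = 0 ∧ ∀ᶠ x in 𝓝[≠] (0 : Cn n), g x ≠ x

/-- `0` is an isolated zero of `h`. -/
def IsolatedZeroAt0 (h : Cn n → Cn n) : Prop :=
  h 0 = 0 ∧ ∀ᶠ x in 𝓝[≠] (0 : Cn n), h x ≠ 0

/-- `p` is a simple fixed point of `g`: `Dg(p)` has no eigenvalue `1`. -/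
def SimpleFixedPt (g : Cn n → Cn n) (p : Cn n) : Prop :=
  g p = p ∧ ¬ Module.End.HasEigenvalue ((fderiv ℂ g p).toLinearMap) 1

/-- The global fixed point index `L(g)` of `g` over `U`: the sum of the fixed point
indices at all fixed points of `g` in `U`. -/
def globalIndex (g : Cn n → Cn n) (U : Set (Cn n)) : ℤ :=
  ∑ᶠ p ∈ {x ∈ U | g x = x}, (fixedPointIndex g p : ℤ)

/-- The global Dold index `P_M(f)` over `U`. -/
def globalDold (f : Cn n → Cn n) (M : ℕ) (U : Set (Cn n)) : ℤ :=
  ∑ τ ∈ M.primeFactors.powerset,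
    (-1 : ℤ) ^ τ.card * globalIndex (f^[M / (∏ p ∈ τ, p)]) U



/-- `Z` is the multiset of zeros of `F` in the disc `ball c ρ`, and `F` does not vanish on
the circle. -/
def IsFac (F : ℂ → ℂ) (c : ℂ) (ρ : ℝ) (Z : Multiset ℂ) : Prop :=
  (∀ ξ ∈ Z, ξ ∈ ball c ρ) ∧ ∃ U : ℂ → ℂ, AnalyticOnNhd ℂ U (closedBall c ρ) ∧
    (∀ z ∈ closedBall c ρ, U z ≠ 0) ∧ ∀ z, F z = (Z.map (fun ξ => z - ξ)).prod * U z

lemma fac_aux (c : ℂ) (ρ : ℝ) (S : Finset ℂ) : ∀ (F : ℂ → ℂ),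
    AnalyticOnNhd ℂ F (closedBall c ρ) →
    (∀ w ∈ closedBall c ρ, ¬ ∀ᶠ z in 𝓝 w, F z = 0) →
    (∀ w ∈ S, w ∈ ball c ρ) →
    (∀ w ∈ closedBall c ρ, F w = 0 → w ∈ S) → ∃ Z, IsFac F c ρ Z := by
  induction S using Finset.induction_on with
  | empty =>
    intro F hF _ _ h0
    refine ⟨0, by simp, F, hF, fun z hz h => by simpa using h0 z hz h, by simp⟩
  | insert w S hw ih =>
    intro F hF hne hS h0
    have hwb : w ∈ ball c ρ := hS w (by simp)
    have hwc : w ∈ closedBall c ρ := ball_subset_closedBall hwb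
    have h1 := (hF w hwc).exists_eventuallyEq_pow_smul_nonzero_iff.mpr (hne w hwc)
    obtain ⟨n, g, hg, hgw, hev⟩ := h1
    set G : ℂ → ℂ := fun z => if z = w then g w else F z / (z - w) ^ n with hG
    have hGF : ∀ z, F z = (z - w) ^ n * G z := by
      intro z
      by_cases hz : z = w
      · subst hz
        have := hev.self_of_nhds
        simp only [hG, if_true]
        simpa using this
      · have : z - w ≠ 0 := sub_ne_zero.mpr hz
        simp only [hG, if_neg hz]
        field_simp
    have hGg : G =ᶠ[𝓝 w] g := by
      filter_upwards [hev] with z hz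
      by_cases hzw : z = w
      · subst hzw; simp [hG]
      · have : z - w ≠ 0 := sub_ne_zero.mpr hzw
        simp only [hG, if_neg hzw, hz, smul_eq_mul]
        field_simp
    have hGan : AnalyticOnNhd ℂ G (closedBall c ρ) := by
      intro z hz
      by_cases hzw : z = w
      · subst hzw; exact hg.congr hGg.symm
      · have h2 : AnalyticAt ℂ (fun z => F z / (z - w) ^ n) z :=
          (hF z hz).div (by fun_prop) (pow_ne_zero _ (sub_ne_zero.mpr hzw))
        refine h2.congr ?_
        filter_upwards [isOpen_ne.mem_nhds hzw] with y hy
        simp only [hG, if_neg hy]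
    obtain ⟨Z, hZ, U, hU, hU0, hUF⟩ := ih G hGan
      (fun y hy h => hne y hy (h.mono fun z hz => by rw [hGF, hz, mul_zero]))
      (fun y hy => hS y (by simp [hy]))
      (fun y hy h => by
        have h3 := h0 y hy (by rw [hGF, h, mul_zero])
        rcases Finset.mem_insert.mp h3 with h4 | h4
        · exfalso; subst h4; simp [hG] at h; exact hgw h
        · exact h4)
    refine ⟨Multiset.replicate n w + Z, ?_, U, hU, hU0, ?_⟩
    · intro ξ hξ
      rcases Multiset.mem_add.mp hξ with h | h
      · rw [Multiset.eq_of_mem_replicate h]; exact hwb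
      · exact hZ ξ h
    · intro z
      rw [hGF, hUF]; simp [mul_assoc]

lemma exists_fac {F : ℂ → ℂ} {c : ℂ} {ρ : ℝ} (hρ : 0 < ρ)
    (hF : AnalyticOnNhd ℂ F (closedBall c ρ)) (hs : ∀ z ∈ sphere c ρ, F z ≠ 0) :
    ∃ Z, IsFac F c ρ Z := by
  have hne : ∀ w ∈ closedBall c ρ, ¬ ∀ᶠ z in 𝓝 w, F z = 0 := by
    intro w hw h
    have := hF.eqOn_zero_of_preconnected_of_eventuallyEq_zero
      (convex_closedBall c ρ).isPreconnected hw h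
    obtain ⟨z, hz⟩ : (sphere c ρ).Nonempty := NormedSpace.sphere_nonempty.mpr hρ.le
    exact hs z hz (this (sphere_subset_closedBall hz))
  have hfin : {w ∈ closedBall c ρ | F w = 0}.Finite := by
    by_contra hinf
    obtain ⟨w, hw, hacc⟩ := Set.Infinite.exists_accPt_of_subset_isCompact hinf
      (isCompact_closedBall c ρ) (fun x hx => hx.1)
    have h1 : ∃ᶠ z in 𝓝[≠] w, F z = 0 := by
      have := accPt_iff_frequently_nhdsNE.mp hacc
      exact this.mono fun z hz => hz.2
    exact hne w hw ((hF w hw).frequently_zero_iff_eventually_zero.mp h1)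
  refine fac_aux c ρ hfin.toFinset F hF hne ?_ ?_
  · intro w hw
    rw [Set.Finite.mem_toFinset] at hw
    have : w ∉ sphere c ρ := fun h => hs w h hw.2
    rw [mem_ball]; exact lt_of_le_of_ne hw.1 this
  · intro w hw h
    rw [Set.Finite.mem_toFinset]; exact ⟨hw, h⟩

lemma circ_formula {c : ℂ} {ρ : ℝ} (hρ : 0 < ρ) {U φ : ℂ → ℂ}
    (hU : AnalyticOnNhd ℂ U (closedBall c ρ)) (hU0 : ∀ z ∈ closedBall c ρ, U z ≠ 0)
    (hφ : AnalyticOnNhd ℂ φ (closedBall c ρ)) (Z : Multiset ℂ)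
    (hZ : ∀ ξ ∈ Z, ξ ∉ sphere c ρ) :
    ContinuousOn (fun z => φ z * logDeriv (fun z => (Z.map (fun ξ => z - ξ)).prod * U z) z)
      (sphere c ρ) ∧
    (∮ z in C(c, ρ), φ z * logDeriv (fun z => (Z.map (fun ξ => z - ξ)).prod * U z) z)
      = (2 * Real.pi * Complex.I) * ((Z.filter (fun ξ => ξ ∈ ball c ρ)).map φ).sum := by
  induction Z using Multiset.induction_on with
  | empty =>
    have han : AnalyticOnNhd ℂ (fun z => φ z * logDeriv U z) (closedBall c ρ) := by
      intro z hz
      exact (hφ z hz).mul ((hU z hz).deriv.div (hU z hz) (hU0 z hz))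
    simp only [Multiset.map_zero, Multiset.prod_zero, one_mul, Multiset.filter_zero,
      Multiset.sum_zero, mul_zero]
    refine ⟨han.continuousOn.mono sphere_subset_closedBall, ?_⟩
    apply DiffContOnCl.circleIntegral_eq_zero hρ.le
    apply DifferentiableOn.diffContOnCl
    rw [closure_ball c hρ.ne']
    exact han.differentiableOn
  | cons ξ Z ih =>
    obtain ⟨ihc, ihs⟩ := ih (fun x hx => hZ x (Multiset.mem_cons_of_mem hx))
    have hξ : ξ ∉ sphere c ρ := hZ ξ (Multiset.mem_cons_self _ _)
    have hcξ : ContinuousOn (fun z => (z - ξ)⁻¹ * φ z) (sphere c ρ) := by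
      apply ContinuousOn.mul
      · apply ContinuousOn.inv₀ (by fun_prop)
        intro z hz h; rw [sub_eq_zero] at h; subst h; exact hξ hz
      · exact hφ.continuousOn.mono sphere_subset_closedBall
    have key : ∀ z ∈ sphere c ρ,
        φ z * logDeriv (fun z => ((ξ ::ₘ Z).map (fun ξ => z - ξ)).prod * U z) z
        = (z - ξ)⁻¹ * φ z
          + φ z * logDeriv (fun z => (Z.map (fun ξ => z - ξ)).prod * U z) z := by
      intro z hz
      have hzc := sphere_subset_closedBall hz
      have e : (fun z => ((ξ ::ₘ Z).map (fun ξ => z - ξ)).prod * U z)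
          = fun z => (z - ξ) * ((Z.map (fun ξ => z - ξ)).prod * U z) := by
        ext z; simp [mul_assoc]
      have hzξ : z - ξ ≠ 0 := by
        intro h; rw [sub_eq_zero] at h; subst h; exact hξ hz
      have hpd : DifferentiableAt ℂ (fun z => (Z.map (fun ξ => z - ξ)).prod) z := by
        clear * -
        induction Z using Multiset.induction_on with
        | empty => simp
        | cons a s h => simp only [Multiset.map_cons, Multiset.prod_cons]; fun_prop
      have hp0 : (Z.map (fun ξ => z - ξ)).prod ≠ 0 := by
        apply Multiset.prod_ne_zero
        simp only [Multiset.mem_map, not_exists, not_and]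
        intro x hx h
        rw [sub_eq_zero] at h; subst h
        exact hZ z (Multiset.mem_cons_of_mem hx) hz
      rw [e, logDeriv_mul (f := fun z => z - ξ)
        (g := fun z => (Z.map (fun ξ => z - ξ)).prod * U z) z hzξ (mul_ne_zero hp0 (hU0 z hzc)) (by fun_prop)
        (hpd.mul (hU z hzc).differentiableAt)]
      have : logDeriv (fun z => z - ξ) z = (z - ξ)⁻¹ := by
        simp [logDeriv_apply]
      rw [this]; ring
    refine ⟨(hcξ.add ihc).congr key, ?_⟩
    rw [circleIntegral.integral_congr hρ.le key, circleIntegral.integral_add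
      (hcξ.circleIntegrable hρ.le) (ihc.circleIntegrable hρ.le), ihs]
    by_cases hb : ξ ∈ ball c ρ
    · have h1 := DifferentiableOn.circleIntegral_sub_inv_smul hφ.differentiableOn hb
      simp only [smul_eq_mul] at h1
      rw [h1, Multiset.filter_cons_of_pos _ hb]
      simp; ring
    · have h1 : (∮ z in C(c, ρ), (z - ξ)⁻¹ * φ z) = 0 := by
        apply DiffContOnCl.circleIntegral_eq_zero hρ.le
        apply DifferentiableOn.diffContOnCl
        rw [closure_ball c hρ.ne']
        intro z hz
        apply DifferentiableAt.differentiableWithinAt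
        apply DifferentiableAt.mul _ (hφ z hz).differentiableAt
        apply DifferentiableAt.inv (by fun_prop)
        intro h; rw [sub_eq_zero] at h; subst h
        rw [mem_closedBall] at hz
        rcases hz.lt_or_eq with h | h
        · exact hb h
        · exact hξ h
      rw [h1, Multiset.filter_cons_of_neg _ hb, zero_add]

lemma IsFac.formula {F : ℂ → ℂ} {c : ℂ} {ρ : ℝ} {Z : Multiset ℂ} (hZ : IsFac F c ρ Z)
    (hρ : 0 < ρ) {φ : ℂ → ℂ} (hφ : AnalyticOnNhd ℂ φ (closedBall c ρ)) :
    (∮ z in C(c, ρ), φ z * (deriv F z / F z))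
      = (2 * Real.pi * Complex.I) * (Z.map φ).sum := by
  obtain ⟨hb, U, hU, hU0, hF⟩ := hZ
  have h := (circ_formula hρ hU hU0 hφ Z (fun ξ hξ h => by
    have := hb ξ hξ; rw [mem_ball] at this; rw [mem_sphere] at h; linarith)).2
  rw [← funext hF, Multiset.filter_eq_self.mpr hb] at h
  exact h

/-- zeros in a subdisc -/
lemma IsFac.sub {F : ℂ → ℂ} {c : ℂ} {ρ : ℝ} {Z : Multiset ℂ} (hZ : IsFac F c ρ Z)
    {c' : ℂ} {ρ' : ℝ} (hsub : closedBall c' ρ' ⊆ closedBall c ρ)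
    (hs : ∀ z ∈ sphere c' ρ', F z ≠ 0) :
    IsFac F c' ρ' (Z.filter (fun ξ => ξ ∈ ball c' ρ')) := by
  obtain ⟨hb, U, hU, hU0, hF⟩ := hZ
  refine ⟨by simp, fun z => ((Z.filter (fun ξ => ¬ ξ ∈ ball c' ρ')).map (fun ξ => z - ξ)).prod * U z,
    ?_, ?_, ?_⟩
  · intro z hz
    refine AnalyticAt.mul ?_ (hU z (hsub hz))
    generalize Z.filter (fun ξ => ¬ ξ ∈ ball c' ρ') = Y
    induction Y using Multiset.induction_on with
    | empty => simp; exact analyticAt_const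
    | cons a s h => simp only [Multiset.map_cons, Multiset.prod_cons]; fun_prop
  · intro z hz
    refine mul_ne_zero ?_ (hU0 z (hsub hz))
    apply Multiset.prod_ne_zero
    simp only [Multiset.mem_map, not_exists, not_and, Multiset.mem_filter]
    rintro x ⟨hx, hx'⟩ h
    rw [sub_eq_zero] at h; subst h
    rcases (mem_closedBall.mp hz).lt_or_eq with h | h
    · exact hx' h
    · refine hs z h ?_
      rw [hF]
      have : (Multiset.map (fun ξ => z - ξ) Z).prod = 0 :=
        Multiset.prod_eq_zero (Multiset.mem_map.mpr ⟨z, hx, sub_self z⟩)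
      rw [this, zero_mul]
  · intro z
    rw [hF, ← mul_assoc, ← Multiset.prod_add, ← Multiset.map_add, Multiset.filter_add_not]

lemma IsFac.mem_iff {F : ℂ → ℂ} {c : ℂ} {ρ : ℝ} {Z : Multiset ℂ} (hZ : IsFac F c ρ Z)
    (z : ℂ) : z ∈ Z ↔ z ∈ ball c ρ ∧ F z = 0 := by
  obtain ⟨hb, U, hU, hU0, hF⟩ := hZ
  constructor
  · intro h
    refine ⟨hb z h, ?_⟩
    rw [hF, Multiset.prod_eq_zero (Multiset.mem_map.mpr ⟨z, h, sub_self z⟩), zero_mul]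
  · rintro ⟨h1, h2⟩
    rw [hF] at h2
    rcases mul_eq_zero.mp h2 with h | h
    · rw [Multiset.prod_eq_zero_iff, Multiset.mem_map] at h
      obtain ⟨a, ha, h⟩ := h
      rw [sub_eq_zero] at h; rwa [h]
    · exact absurd h (hU0 z (ball_subset_closedBall h1))

/-- local order from two sided bound -/
lemma IsFac.count_eq {F : ℂ → ℂ} {c : ℂ} {ρ : ℝ} {Z : Multiset ℂ} (hZ : IsFac F c ρ Z)
    {w : ℂ} (hw : w ∈ ball c ρ) {l : ℕ} {A B : ℝ} (hA : 0 < A) 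
    (hev : ∀ᶠ z in 𝓝[≠] w, A * ‖z - w‖ ^ l ≤ ‖F z‖ ∧ ‖F z‖ ≤ B * ‖z - w‖ ^ l) :
    Z.count w = l := by
  obtain ⟨hb, U, hU, hU0, hF⟩ := hZ
  set n := Z.count w with hn
  set V : ℂ → ℂ := fun z => ((Z.filter (fun ξ => ¬ w = ξ)).map (fun ξ => z - ξ)).prod * U z with hV
  have hFV : ∀ z, F z = (z - w) ^ n * V z := by
    intro z
    rw [hF, hV, hn]
    simp only
    rw [← mul_assoc]
    congr 1
    conv_lhs => rw [← Multiset.filter_add_not (fun ξ => w = ξ) Z]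
    rw [Multiset.map_add, Multiset.prod_add, Multiset.filter_eq]
    simp
  have hVc : ContinuousAt V w := by
    refine ContinuousAt.mul ?_ (hU w (ball_subset_closedBall hw)).continuousAt
    generalize Z.filter (fun ξ => ¬ w = ξ) = Y
    induction Y using Multiset.induction_on with
    | empty => simp; exact continuousAt_const
    | cons a s h => simp only [Multiset.map_cons, Multiset.prod_cons]; fun_prop
  have hVw : V w ≠ 0 := by
    refine mul_ne_zero ?_ (hU0 w (ball_subset_closedBall hw))
    apply Multiset.prod_ne_zero
    simp only [Multiset.mem_map, not_exists, not_and, Multiset.mem_filter]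
    rintro x ⟨hx, hx'⟩ h
    rw [sub_eq_zero] at h; exact hx' h
  have hVn : Tendsto (fun z => ‖V z‖) (𝓝[≠] w) (𝓝 ‖V w‖) :=
    (hVc.norm.tendsto).mono_left nhdsWithin_le_nhds
  have hz0 : Tendsto (fun z => ‖z - w‖) (𝓝[≠] w) (𝓝 0) := by
    have : ContinuousAt (fun z => ‖z - w‖) w := by fun_prop
    simpa [ContinuousAt] using this.tendsto.mono_left nhdsWithin_le_nhds
  have hVw' : 0 < ‖V w‖ := norm_pos_iff.mpr hVw
  have hne : ∀ᶠ z in 𝓝[≠] w, 0 < ‖z - w‖ := by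
    filter_upwards [self_mem_nhdsWithin] with z hz
    exact norm_pos_iff.mpr (sub_ne_zero.mpr hz)
  rcases lt_trichotomy n l with h | h | h
  · exfalso
    obtain ⟨d, rfl⟩ := Nat.exists_eq_add_of_lt h
    have h1 : ∀ᶠ z in 𝓝[≠] w, ‖V z‖ ≤ B * ‖z - w‖ ^ (d + 1) := by
      filter_upwards [hev, hne] with z hz hz'
      have h2 := hz.2
      rw [hFV, norm_mul, norm_pow, show n + d + 1 = n + (d + 1) by ring, pow_add] at h2
      have := pow_pos hz' n
      by_contra h3
      push Not at h3
      nlinarith [mul_lt_mul_of_pos_left h3 this]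
    have h2 := le_of_tendsto_of_tendsto hVn ((hz0.pow (d + 1)).const_mul B) h1
    simp at h2; exact hVw h2
  · exact h
  · exfalso
    obtain ⟨d, hd⟩ := Nat.exists_eq_add_of_lt h
    have h1 : ∀ᶠ z in 𝓝[≠] w, A ≤ ‖z - w‖ ^ (d + 1) * ‖V z‖ := by
      filter_upwards [hev, hne] with z hz hz'
      have h2 := hz.1
      rw [hFV, norm_mul, norm_pow, hd, show l + d + 1 = l + (d + 1) by ring, pow_add] at h2
      have := pow_pos hz' l
      by_contra h3
      push Not at h3
      nlinarith [mul_lt_mul_of_pos_left h3 this]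
    have h2 := ge_of_tendsto ((hz0.pow (d + 1)).mul hVn) h1
    simp at h2; linarith



lemma continuous_circ {X : Type*} [TopologicalSpace X] {c : ℂ} {ρ : ℝ} {Φ : X → ℂ → ℂ}
    (h : Continuous (fun p : X × ℝ => Φ p.1 (circleMap c ρ p.2))) :
    Continuous (fun p => ∮ z in C(c, ρ), Φ p z) := by
  unfold circleIntegral
  apply intervalIntegral.continuous_parametric_intervalIntegral_of_continuous'
  have : Continuous (fun p : X × ℝ => deriv (circleMap c ρ) p.2 • Φ p.1 (circleMap c ρ p.2)) := by
    simp only [deriv_circleMap]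
    have h1 : Continuous (fun p : X × ℝ => circleMap 0 ρ p.2 * Complex.I) := by fun_prop
    exact h1.smul h
  exact this

lemma two_pi_I_ne : (2 * Real.pi * Complex.I : ℂ) ≠ 0 := Complex.two_pi_I_ne_zero

lemma continuous_psum {X : Type*} [TopologicalSpace X] {c : ℂ} {ρ : ℝ} (hρ : 0 < ρ)
    {F F' G : X → ℂ → ℂ}
    (hFc : Continuous (fun p : X × ℝ => F p.1 (circleMap c ρ p.2)))
    (hF'c : Continuous (fun p : X × ℝ => F' p.1 (circleMap c ρ p.2)))
    (hGc : Continuous (fun p : X × ℝ => G p.1 (circleMap c ρ p.2)))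
    (hF0 : ∀ p, ∀ z ∈ sphere c ρ, F p z ≠ 0) (j : ℕ) :
    Continuous (fun p => ∮ z in C(c, ρ), G p z ^ j * (F' p z / F p z)) := by
  apply continuous_circ
  exact (hGc.pow j).mul (hF'c.div hFc (fun p => hF0 _ _ (circleMap_mem_sphere c hρ.le _)))

lemma card_const {X : Type*} [TopologicalSpace X] [PreconnectedSpace X] {c : ℂ} {ρ : ℝ}
    (hρ : 0 < ρ) {F F' : X → ℂ → ℂ} {Z : X → Multiset ℂ} (hZ : ∀ p, IsFac (F p) c ρ (Z p))
    (hd : ∀ p, ∀ z ∈ sphere c ρ, deriv (F p) z = F' p z)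
    (hFc : Continuous (fun p : X × ℝ => F p.1 (circleMap c ρ p.2)))
    (hF'c : Continuous (fun p : X × ℝ => F' p.1 (circleMap c ρ p.2)))
    (hF0 : ∀ p, ∀ z ∈ sphere c ρ, F p z ≠ 0) (p q : X) : (Z p).card = (Z q).card := by
  have h1 : Continuous (fun p => (2 * Real.pi * Complex.I : ℂ)⁻¹ *
      ∮ z in C(c, ρ), (1 : ℂ) ^ 0 * (F' p z / F p z)) :=
    continuous_const.mul (continuous_psum (G := fun _ _ => 1) hρ hFc hF'c continuous_const hF0 0)
  have h2 : ∀ p, (2 * Real.pi * Complex.I : ℂ)⁻¹ *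
      (∮ z in C(c, ρ), (1 : ℂ) ^ 0 * (F' p z / F p z)) = ((Z p).card : ℂ) := by
    intro p
    have h3 : (∮ z in C(c, ρ), (1 : ℂ) ^ 0 * (F' p z / F p z))
        = ∮ z in C(c, ρ), (fun _ => (1 : ℂ)) z * (deriv (F p) z / F p z) := by
      apply circleIntegral.integral_congr hρ.le
      intro z hz; simp [hd p z hz]
    rw [h3, (hZ p).formula hρ (fun z _ => analyticAt_const), ← mul_assoc,
      inv_mul_cancel₀ two_pi_I_ne]
    simp
  simp_rw [h2] at h1
  have h4 : Continuous (fun p => ((Z p).card : ℝ)) := by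
    have := Complex.continuous_re.comp h1
    simpa [Function.comp_def] using this
  have h5 : Continuous (fun p => (Z p).card) :=
    Nat.isClosedEmbedding_coe_real.isInducing.continuous_iff.mpr h4
  exact PreconnectedSpace.constant inferInstance h5

open MvPolynomial in
lemma esymm_mem (k n : ℕ) : esymm (Fin k) ℂ n ∈
    Algebra.adjoin ℂ (Set.range (psum (Fin k) ℂ)) := by
  induction n using Nat.strong_induction_on with
  | _ n ih =>
    rcases Nat.eq_zero_or_pos n with rfl | hn
    · rw [esymm_zero]; exact one_mem _
    · have h := mul_esymm_eq_sum (Fin k) ℂ n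
      have h1 : esymm (Fin k) ℂ n = (n : ℂ)⁻¹ • ((n : MvPolynomial (Fin k) ℂ) * esymm (Fin k) ℂ n) := by
        have : (n : MvPolynomial (Fin k) ℂ) = MvPolynomial.C (n : ℂ) := by simp
        rw [this, ← MvPolynomial.smul_eq_C_mul, smul_smul, inv_mul_cancel₀ (by exact_mod_cast hn.ne'),
          one_smul]
      rw [h1, h]
      apply Subalgebra.smul_mem
      apply mul_mem (pow_mem (neg_mem (one_mem _)) _)
      apply sum_mem
      intro a ha
      simp only [Finset.mem_filter] at ha
      exact mul_mem (mul_mem (pow_mem (neg_mem (one_mem _)) _) (ih _ ha.2))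
        (Algebra.subset_adjoin ⟨_, rfl⟩)

lemma prod_eq_poly (k : ℕ) : ∃ Q : MvPolynomial ℕ ℂ, ∀ Z : Multiset ℂ, Z.card = k →
    Z.prod = MvPolynomial.eval (fun j => (Z.map (· ^ j)).sum) Q := by
  have h := esymm_mem k k
  rw [Algebra.adjoin_range_eq_range_aeval] at h
  obtain ⟨Q, hQ⟩ := h
  refine ⟨Q, fun Z hZ => ?_⟩
  obtain ⟨l, rfl⟩ : ∃ l : List ℂ, Z = (l : Multiset ℂ) := ⟨Z.toList, by simp⟩
  simp only [Multiset.coe_card] at hZ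
  subst hZ
  have e : (l : Multiset ℂ) = (Finset.univ.val.map (fun i : Fin l.length => l.get i)) := by
    simp [Fin.univ_val_map]
  have h2 := MvPolynomial.aeval_esymm_eq_multiset_esymm (Fin l.length) ℂ l.length (fun i => l.get i)
  rw [← e] at h2
  have h3 : (l : Multiset ℂ).esymm l.length = (l : Multiset ℂ).prod := by
    have h5 := Multiset.powersetCard_self (l : Multiset ℂ)
    rw [Multiset.coe_card] at h5
    rw [Multiset.esymm, h5, Multiset.map_singleton, Multiset.sum_singleton]
  rw [← h3, ← h2, ← hQ]
  have : (MvPolynomial.aeval (fun i => l.get i)).comp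
      (MvPolynomial.aeval (MvPolynomial.psum (Fin l.length) ℂ))
      = MvPolynomial.aeval (R := ℂ) (fun j => ((l : Multiset ℂ).map (· ^ j)).sum) := by
    apply MvPolynomial.algHom_ext
    intro j
    simp only [AlgHom.comp_apply, MvPolynomial.aeval_X]
    conv_rhs => rw [e]
    rw [Multiset.map_map]
    simp only [MvPolynomial.psum, map_sum, map_pow, MvPolynomial.aeval_X]
    rfl
  have h4 := DFunLike.congr_fun this Q
  simp only [AlgHom.comp_apply] at h4
  erw [h4]
  rw [MvPolynomial.aeval_eq_eval]

lemma res_poly {X : Type*} [TopologicalSpace X] [PreconnectedSpace X] [Nonempty X] {c : ℂ} {ρ : ℝ}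
    (hρ : 0 < ρ) {F F' G : X → ℂ → ℂ} {Z : X → Multiset ℂ} (hZ : ∀ p, IsFac (F p) c ρ (Z p))
    (hd : ∀ p, ∀ z ∈ sphere c ρ, deriv (F p) z = F' p z)
    (hFc : Continuous (fun p : X × ℝ => F p.1 (circleMap c ρ p.2)))
    (hF'c : Continuous (fun p : X × ℝ => F' p.1 (circleMap c ρ p.2)))
    (hF0 : ∀ p, ∀ z ∈ sphere c ρ, F p z ≠ 0)
    (hG : ∀ p, AnalyticOnNhd ℂ (G p) (closedBall c ρ)) :
    ∃ Q : MvPolynomial ℕ ℂ, ∀ p, ((Z p).map (G p)).prod = MvPolynomial.eval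
      (fun j => (2 * Real.pi * Complex.I : ℂ)⁻¹ *
        ∮ z in C(c, ρ), G p z ^ j * (F' p z / F p z)) Q := by
  obtain ⟨p₀⟩ := ‹Nonempty X›
  obtain ⟨Q, hQ⟩ := prod_eq_poly (Z p₀).card
  refine ⟨Q, fun p => ?_⟩
  rw [hQ ((Z p).map (G p)) (by
    rw [Multiset.card_map]; exact card_const hρ hZ hd hFc hF'c hF0 p p₀)]
  congr 2
  ext j
  have h3 : (∮ z in C(c, ρ), G p z ^ j * (F' p z / F p z))
      = ∮ z in C(c, ρ), (fun z => G p z ^ j) z * (deriv (F p) z / F p z) := by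
    apply circleIntegral.integral_congr hρ.le
    intro z hz; simp [hd p z hz]
  rw [h3, (hZ p).formula hρ (φ := fun z => G p z ^ j) (fun z hz => (hG p z hz).pow j), ← mul_assoc,
    inv_mul_cancel₀ two_pi_I_ne, one_mul, Multiset.map_map]
  rfl

lemma differentiableOn_circ {c : ℂ} {ρ : ℝ} (hρ : 0 < ρ) {T : Set ℂ} (hT : IsOpen T)
    {Φ : ℂ × ℂ → ℂ} (h : ∀ z ∈ sphere c ρ, ∀ t ∈ T, AnalyticAt ℂ Φ (z, t)) :
    DifferentiableOn ℂ (fun t => ∮ z in C(c, ρ), Φ (z, t)) T := by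
  intro t₀ ht₀
  obtain ⟨ε, hε, hεT⟩ := Metric.nhds_basis_closedBall.mem_iff.mp (hT.mem_nhds ht₀)
  set D : ℂ × ℂ → ℂ := fun p => fderiv ℂ Φ p (0, 1) with hD
  have hDc : ContinuousOn D (sphere c ρ ×ˢ closedBall t₀ ε) := by
    intro p hp
    have := (h p.1 hp.1 p.2 (hεT hp.2)).fderiv.continuousAt
    exact (this.clm_apply continuousAt_const).continuousWithinAt
  obtain ⟨M, hM⟩ := ((isCompact_sphere c ρ).prod (isCompact_closedBall t₀ ε)).exists_bound_of_continuousOn hDc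
  have hcont : ∀ t ∈ T, Continuous (fun θ => Φ (circleMap c ρ θ, t)) := by
    intro t ht
    rw [continuous_iff_continuousAt]
    intro θ
    have h1 : ContinuousAt (fun θ : ℝ => (circleMap c ρ θ, t)) θ := by fun_prop
    exact ContinuousAt.comp (f := fun θ : ℝ => (circleMap c ρ θ, t)) (h _ (circleMap_mem_sphere c hρ.le θ) t ht).continuousAt h1
  have hDcont : Continuous (fun θ => D (circleMap c ρ θ, t₀)) := by
    rw [continuous_iff_continuousAt]
    intro θ
    have h1 : ContinuousAt (fun θ : ℝ => (circleMap c ρ θ, t₀)) θ := by fun_prop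
    have h2 : ContinuousAt D (circleMap c ρ θ, t₀) :=
      (h _ (circleMap_mem_sphere c hρ.le θ) t₀ ht₀).fderiv.continuousAt.clm_apply continuousAt_const
    exact ContinuousAt.comp (f := fun θ : ℝ => (circleMap c ρ θ, t₀)) h2 h1
  have hdc : Continuous (deriv (circleMap c ρ)) := by
    have : deriv (circleMap c ρ) = fun θ => circleMap 0 ρ θ * Complex.I := by
      ext θ; simp
    rw [this]; fun_prop
  have key := intervalIntegral.hasDerivAt_integral_of_dominated_loc_of_deriv_le
    (μ := MeasureTheory.volume) (a := 0) (b := 2 * Real.pi)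
    (F := fun t θ => deriv (circleMap c ρ) θ • Φ (circleMap c ρ θ, t))
    (F' := fun t θ => deriv (circleMap c ρ) θ • D (circleMap c ρ θ, t))
    (x₀ := t₀) (s := closedBall t₀ ε) (bound := fun _ => ρ * M)
    (closedBall_mem_nhds _ hε)
    (by
      filter_upwards [hT.mem_nhds ht₀] with t ht
      exact (hdc.smul (hcont t ht)).aestronglyMeasurable)
    ((hdc.smul (hcont t₀ ht₀)).intervalIntegrable _ _)
    ((hdc.smul hDcont).aestronglyMeasurable)
    (by
      refine Eventually.of_forall fun θ _ t ht => ?_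
      rw [norm_smul]
      have h1 : ‖deriv (circleMap c ρ) θ‖ = ρ := by simp [abs_of_pos hρ]
      rw [h1]
      exact mul_le_mul_of_nonneg_left (hM _ ⟨circleMap_mem_sphere c hρ.le θ, ht⟩) hρ.le)
    intervalIntegrable_const
    (by
      refine Eventually.of_forall fun θ _ t ht => ?_
      have h1 := (h _ (circleMap_mem_sphere c hρ.le θ) t (hεT ht)).differentiableAt.hasFDerivAt
      have h2 : HasDerivAt (fun t : ℂ => (circleMap c ρ θ, t)) (0, 1) t :=
        (hasDerivAt_const t _).prodMk (hasDerivAt_id t)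
      exact (h1.comp_hasDerivAt t h2).const_smul (deriv (circleMap c ρ) θ))
  exact key.2.differentiableAt.differentiableWithinAt

lemma differentiableOn_eval {T : Set ℂ} {s : ℕ → ℂ → ℂ} (hs : ∀ j, DifferentiableOn ℂ (s j) T)
    (Q : MvPolynomial ℕ ℂ) :
    DifferentiableOn ℂ (fun t => MvPolynomial.eval (fun j => s j t) Q) T := by
  induction Q using MvPolynomial.induction_on with
  | C a => simp
  | add p q hp hq => simp only [map_add]; exact hp.add hq
  | mul_X p n hp => simp only [map_mul, MvPolynomial.eval_X]; exact hp.mul (hs n)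

lemma continuous_eval' {X : Type*} [TopologicalSpace X] {s : ℕ → X → ℂ} (hs : ∀ j, Continuous (s j))
    (Q : MvPolynomial ℕ ℂ) :
    Continuous (fun t => MvPolynomial.eval (fun j => s j t) Q) := by
  induction Q using MvPolynomial.induction_on with
  | C a => simp; exact continuous_const
  | add p q hp hq => simp only [map_add]; exact hp.add hq
  | mul_X p n hp => simp only [map_mul, MvPolynomial.eval_X]; exact hp.mul (hs n)



lemma card_const' {X : Type*} [TopologicalSpace X] [PreconnectedSpace X] {c : ℂ} {σ τ : ℝ}
    (hσ : 0 < σ) (hστ : σ < τ) {f : X → ℂ → ℂ} {Z : X → Multiset ℂ}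
    (hZ : ∀ p, IsFac (f p) c σ (Z p))
    (hd : ∀ p, DifferentiableOn ℂ (f p) (ball c τ))
    (hc : Continuous (fun p : X × ball c τ => f p.1 p.2))
    (h0 : ∀ p, ∀ z ∈ sphere c σ, f p z ≠ 0) (p q : X) : (Z p).card = (Z q).card := by
  obtain ⟨σ', h1, h2⟩ := exists_between hστ
  have hσ' : 0 < σ' := hσ.trans h1
  have hcm : ∀ θ, circleMap c σ θ ∈ ball c τ := fun θ => by
    have := circleMap_mem_sphere c hσ.le θ
    rw [mem_sphere] at this; rw [mem_ball]; linarith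
  have hcm' : ∀ θ, circleMap c σ' θ ∈ ball c τ := fun θ => by
    have := circleMap_mem_sphere c hσ'.le θ
    rw [mem_sphere] at this; rw [mem_ball]; linarith
  refine card_const (F := f) hσ hZ
    (F' := fun p z => (2 * Real.pi * Complex.I : ℂ)⁻¹ • ∮ w in C(c, σ'), ((w - z) ^ 2)⁻¹ • f p w)
    ?_ ?_ ?_ h0 p q
  · intro p z hz
    rw [Complex.two_pi_I_inv_smul_circleIntegral_sub_sq_inv_smul_of_differentiable
      isOpen_ball (closedBall_subset_ball h2) (hd p)]
    rw [mem_sphere] at hz; rw [mem_ball]; linarith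
  · exact hc.comp (continuous_fst.prodMk
      (((continuous_circleMap c σ).comp continuous_snd).subtype_mk (fun p => hcm p.2)))
  · simp only [smul_eq_mul]
    refine Continuous.mul continuous_const ?_
    refine continuous_circ (X := X × ℝ)
      (Φ := fun p w => ((w - circleMap c σ p.2) ^ 2)⁻¹ * f p.1 w) ?_
    apply Continuous.mul
    · apply Continuous.inv₀ (by fun_prop)
      intro x
      apply pow_ne_zero
      rw [sub_ne_zero]
      intro h
      have e1 := circleMap_mem_sphere c hσ.le x.1.2
      have e2 := circleMap_mem_sphere c hσ'.le x.2
      rw [h] at e2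
      rw [mem_sphere] at e1 e2; linarith
    · exact hc.comp ((continuous_fst.comp continuous_fst).prodMk
        (((continuous_circleMap c σ').comp continuous_snd).subtype_mk (fun p => hcm' p.2)))

/-- The standing assumptions on a pair `(F, G)` on the polydisc. -/
structure Good (F G : ℂ × ℂ → ℂ) (ρ τ : ℝ) : Prop where
  hF : ∀ z ∈ closedBall (0 : ℂ) ρ, ∀ t ∈ ball (0 : ℂ) τ, AnalyticAt ℂ F (z, t)
  hG : ∀ z ∈ closedBall (0 : ℂ) ρ, ∀ t ∈ ball (0 : ℂ) τ, AnalyticAt ℂ G (z, t)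
  h0 : ∀ z ∈ sphere (0 : ℂ) ρ, ∀ t ∈ ball (0 : ℂ) τ, F (z, t) ≠ 0

/-- Zeros of `F (·, t)`. -/
def roots (F : ℂ × ℂ → ℂ) (ρ : ℝ) (t : ℂ) : Multiset ℂ :=
  if h : ∃ Z, IsFac (fun z => F (z, t)) 0 ρ Z then h.choose else 0

/-- The resultant. -/
def Res (F G : ℂ × ℂ → ℂ) (ρ : ℝ) (t : ℂ) : ℂ := ((roots F ρ t).map (fun z => G (z, t))).prod

lemma an_slice {F : ℂ × ℂ → ℂ} {z t : ℂ} (h : AnalyticAt ℂ F (z, t)) :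
    AnalyticAt ℂ (fun z => F (z, t)) z :=
  AnalyticAt.comp (f := fun z : ℂ => (z, t)) h (by fun_prop)

lemma Good.fac {F G : ℂ × ℂ → ℂ} {ρ τ : ℝ} (h : Good F G ρ τ) (hρ : 0 < ρ) {t : ℂ}
    (ht : t ∈ ball (0 : ℂ) τ) : IsFac (fun z => F (z, t)) 0 ρ (roots F ρ t) := by
  have : ∃ Z, IsFac (fun z => F (z, t)) 0 ρ Z :=
    exists_fac hρ (fun z hz => an_slice (h.hF z hz t ht)) (fun z hz => h.h0 z hz t ht)
  rw [roots, dif_pos this]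
  exact this.choose_spec

lemma deriv_slice {F : ℂ × ℂ → ℂ} {z t : ℂ} (h : DifferentiableAt ℂ F (z, t)) :
    deriv (fun z => F (z, t)) z = fderiv ℂ F (z, t) (1, 0) := by
  have h2 : HasDerivAt (fun z : ℂ => (z, t)) (1, 0) z :=
    (hasDerivAt_id z).prodMk (hasDerivAt_const z _)
  exact (h.hasFDerivAt.comp_hasDerivAt z h2).deriv

/-- general family version -/
lemma res_family {X : Type*} [TopologicalSpace X] [PreconnectedSpace X] [Nonempty X]
    {F G : X → ℂ × ℂ → ℂ} {t : X → ℂ} {ρ τ : ℝ} (hρ : 0 < ρ)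
    (hg : ∀ p, Good (F p) (G p) ρ τ) (ht : ∀ p, t p ∈ ball (0 : ℂ) τ)
    (hFc : Continuous (fun p : X × ℝ => F p.1 (circleMap 0 ρ p.2, t p.1)))
    (hF'c : Continuous (fun p : X × ℝ =>
      fderiv ℂ (F p.1) (circleMap 0 ρ p.2, t p.1) (1, 0))) :
    ∃ Q : MvPolynomial ℕ ℂ, ∀ p, Res (F p) (G p) ρ (t p) = MvPolynomial.eval
      (fun j => (2 * Real.pi * Complex.I : ℂ)⁻¹ *
        ∮ z in C(0, ρ), G p (z, t p) ^ j * (fderiv ℂ (F p) (z, t p) (1, 0) / F p (z, t p))) Q := by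
  refine res_poly (X := X) (c := 0) (ρ := ρ) hρ (F := fun p z => F p (z, t p))
    (F' := fun p z => fderiv ℂ (F p) (z, t p) (1, 0)) (G := fun p z => G p (z, t p))
    (Z := fun p => roots (F p) ρ (t p)) ?_ ?_ hFc hF'c ?_ ?_
  · intro p; exact (hg p).fac hρ (ht p)
  · intro p z hz
    exact deriv_slice ((hg p).hF z (sphere_subset_closedBall hz) _ (ht p)).differentiableAt
  · intro p z hz; exact (hg p).h0 z hz _ (ht p)
  · intro p z hz; exact an_slice ((hg p).hG z hz _ (ht p))

lemma circ_mem (ρ : ℝ) (hρ : 0 < ρ) (θ : ℝ) : circleMap 0 ρ θ ∈ closedBall (0 : ℂ) ρ :=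
  sphere_subset_closedBall (circleMap_mem_sphere 0 hρ.le θ)

/-- continuity along the torus. -/
lemma cont_torus {X : Type*} [TopologicalSpace X] {E : Type*} [TopologicalSpace E]
    {ρ τ : ℝ} (hρ : 0 < ρ) {t : X → ℂ} (htc : Continuous t)
    (ht : ∀ p, t p ∈ ball (0 : ℂ) τ) {Φ : ℂ × ℂ → E}
    (h : ∀ z ∈ closedBall (0 : ℂ) ρ, ∀ t ∈ ball (0 : ℂ) τ, ContinuousAt Φ (z, t)) :
    Continuous (fun p : X × ℝ => Φ (circleMap 0 ρ p.2, t p.1)) := by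
  rw [continuous_iff_continuousAt]
  intro p
  exact ContinuousAt.comp (f := fun p : X × ℝ => (circleMap 0 ρ p.2, t p.1))
    (h _ (circ_mem ρ hρ _) _ (ht _)) (Continuous.continuousAt (by fun_prop))

lemma preconn_ball (c : ℂ) (τ : ℝ) : PreconnectedSpace (ball c τ) :=
  Subtype.preconnectedSpace (convex_ball c τ).isPreconnected

lemma Good.res_diff {F G : ℂ × ℂ → ℂ} {ρ τ : ℝ} (h : Good F G ρ τ) (hρ : 0 < ρ) (hτ : 0 < τ) :
    DifferentiableOn ℂ (Res F G ρ) (ball 0 τ) := by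
  have := preconn_ball 0 τ
  have : Nonempty (ball (0 : ℂ) τ) := ⟨⟨0, by simpa using hτ⟩⟩
  obtain ⟨Q, hQ⟩ := res_family (X := ball (0 : ℂ) τ) (F := fun _ => F) (G := fun _ => G)
    (t := fun p => (p : ℂ)) hρ (fun _ => h) (fun p => p.2)
    (cont_torus hρ continuous_subtype_val (fun p => p.2)
      (fun z hz t ht => (h.hF z hz t ht).continuousAt))
    (cont_torus (Φ := fun x => fderiv ℂ F x (1, 0)) hρ continuous_subtype_val (fun p => p.2)
      (fun z hz t ht => (h.hF z hz t ht).fderiv.continuousAt.clm_apply continuousAt_const))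
  refine DifferentiableOn.congr (f := fun t => MvPolynomial.eval
      (fun j => (2 * Real.pi * Complex.I : ℂ)⁻¹ *
        ∮ z in C(0, ρ), G (z, t) ^ j * (fderiv ℂ F (z, t) (1, 0) / F (z, t))) Q)
    ?_ (fun t ht => hQ ⟨t, ht⟩)
  apply differentiableOn_eval
  intro j
  apply DifferentiableOn.const_mul
  refine differentiableOn_circ (Φ := fun x => G x ^ j * (fderiv ℂ F x (1, 0) / F x)) hρ isOpen_ball ?_
  intro z hz t ht
  have hz' := sphere_subset_closedBall hz
  have hda : AnalyticAt ℂ (fun x => fderiv ℂ F x (1, 0)) (z, t) :=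
    AnalyticAt.comp (g := fun L : ℂ × ℂ →L[ℂ] ℂ => L (1, 0))
      ((ContinuousLinearMap.apply ℂ ℂ ((1 : ℂ), (0 : ℂ))).analyticAt _) (h.hF z hz' t ht).fderiv
  exact ((h.hG z hz' t ht).pow j).mul
    (hda.div (h.hF z hz' t ht) (h.h0 z hz t ht))

/-- homotopy -/
def hom (F₀ F₁ : ℂ × ℂ → ℂ) (s : ℝ) : ℂ × ℂ → ℂ := fun x => F₀ x + (s : ℂ) * (F₁ x - F₀ x)

lemma homotopy {F₀ G₀ F₁ G₁ : ℂ × ℂ → ℂ} {ρ τ σ : ℝ} (hρ : 0 < ρ) (hσ : 0 < σ) (hστ : σ < τ)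
    (h₀ : Good F₀ G₀ ρ τ) (h₁ : Good F₁ G₁ ρ τ)
    (hz : ∀ s ∈ Icc (0 : ℝ) 1, ∀ z ∈ sphere (0 : ℂ) ρ, ∀ t ∈ ball (0 : ℂ) τ,
      hom F₀ F₁ s (z, t) ≠ 0)
    (hside : ∀ s ∈ Icc (0 : ℝ) 1, ∀ z ∈ closedBall (0 : ℂ) ρ, ∀ t ∈ sphere (0 : ℂ) σ,
      hom F₀ F₁ s (z, t) = 0 → hom G₀ G₁ s (z, t) ≠ 0)
    {W₀ W₁ : Multiset ℂ} (hW₀ : IsFac (Res F₀ G₀ ρ) 0 σ W₀) (hW₁ : IsFac (Res F₁ G₁ ρ) 0 σ W₁) :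
    W₀.card = W₁.card := by
  have hτ : 0 < τ := hσ.trans hστ
  have hg : ∀ s : Icc (0 : ℝ) 1, Good (hom F₀ F₁ s) (hom G₀ G₁ s) ρ τ := by
    intro s
    refine ⟨fun z hz t ht => ?_, fun z hz t ht => ?_, fun z hz' t ht => hz s s.2 z hz' t ht⟩
    · exact (h₀.hF z hz t ht).add (analyticAt_const.mul ((h₁.hF z hz t ht).sub (h₀.hF z hz t ht)))
    · exact (h₀.hG z hz t ht).add (analyticAt_const.mul ((h₁.hG z hz t ht).sub (h₀.hG z hz t ht)))
  have hR0 : ∀ s : Icc (0 : ℝ) 1, ∀ t ∈ sphere (0 : ℂ) σ,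
      Res (hom F₀ F₁ s) (hom G₀ G₁ s) ρ t ≠ 0 := by
    intro s t ht
    have ht' : t ∈ ball (0 : ℂ) τ := by
      rw [mem_sphere] at ht; rw [mem_ball]; linarith
    apply Multiset.prod_ne_zero
    rw [Multiset.mem_map]
    rintro ⟨z, hz1, hz2⟩
    have h3 := (((hg s).fac hρ ht').mem_iff z).mp hz1
    exact hside s s.2 z (ball_subset_closedBall h3.1) t ht h3.2 hz2
  have hfac : ∀ s : Icc (0 : ℝ) 1, ∃ W, IsFac (Res (hom F₀ F₁ s) (hom G₀ G₁ s) ρ) 0 σ W := by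
    intro s
    apply exists_fac hσ
    · intro t ht
      exact ((hg s).res_diff hρ hτ).analyticAt (isOpen_ball.mem_nhds (closedBall_subset_ball hστ ht))
    · exact hR0 s
  have : PreconnectedSpace (Icc (0 : ℝ) 1) := Subtype.preconnectedSpace isPreconnected_Icc
  have := preconn_ball 0 τ
  have : Nonempty (ball (0 : ℂ) τ) := ⟨⟨0, by simpa using hτ⟩⟩
  set W : Icc (0 : ℝ) 1 → Multiset ℂ := fun s =>
    if s = 0 then W₀ else if s = 1 then W₁ else (hfac s).choose with hWdef
  have e0 : ∀ F₀ F₁ : ℂ × ℂ → ℂ, hom F₀ F₁ ((0 : Icc (0 : ℝ) 1) : ℝ) = F₀ := by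
    intro F₀ F₁; ext x; simp [hom]
  have e1 : ∀ F₀ F₁ : ℂ × ℂ → ℂ, hom F₀ F₁ ((1 : Icc (0 : ℝ) 1) : ℝ) = F₁ := by
    intro F₀ F₁; ext x; simp [hom]
  have hW : ∀ s : Icc (0 : ℝ) 1, IsFac (Res (hom F₀ F₁ s) (hom G₀ G₁ s) ρ) 0 σ (W s) := by
    intro s
    simp only [hWdef]
    split_ifs with ha hb
    · subst ha; rw [e0, e0]; exact hW₀
    · subst hb; rw [e1, e1]; exact hW₁
    · exact (hfac s).choose_spec
  have hcomp : ∀ Φ₀ Φ₁ : ℂ × ℂ → ℂ,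
      (∀ z ∈ closedBall (0 : ℂ) ρ, ∀ t ∈ ball (0 : ℂ) τ, ContinuousAt Φ₀ (z, t)) →
      (∀ z ∈ closedBall (0 : ℂ) ρ, ∀ t ∈ ball (0 : ℂ) τ, ContinuousAt Φ₁ (z, t)) →
      Continuous (fun p : (Icc (0 : ℝ) 1 × ball (0 : ℂ) τ) × ℝ =>
        hom Φ₀ Φ₁ p.1.1 (circleMap 0 ρ p.2, (p.1.2 : ℂ))) := by
    intro Φ₀ Φ₁ k₀ k₁
    have c0 := cont_torus (X := Icc (0 : ℝ) 1 × ball (0 : ℂ) τ) (t := fun p => (p.2 : ℂ)) hρ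
      (by fun_prop) (fun p => p.2.2) k₀
    have c1 := cont_torus (X := Icc (0 : ℝ) 1 × ball (0 : ℂ) τ) (t := fun p => (p.2 : ℂ)) hρ
      (by fun_prop) (fun p => p.2.2) k₁
    unfold hom
    exact c0.add (Continuous.mul (by fun_prop) (c1.sub c0))
  have hFc := hcomp F₀ F₁ (fun z hz t ht => (h₀.hF z hz t ht).continuousAt)
    (fun z hz t ht => (h₁.hF z hz t ht).continuousAt)
  have hGc := hcomp G₀ G₁ (fun z hz t ht => (h₀.hG z hz t ht).continuousAt)
    (fun z hz t ht => (h₁.hG z hz t ht).continuousAt)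
  have hF'c := hcomp (fun x => fderiv ℂ F₀ x (1, 0)) (fun x => fderiv ℂ F₁ x (1, 0))
    (fun z hz t ht => (h₀.hF z hz t ht).fderiv.continuousAt.clm_apply continuousAt_const)
    (fun z hz t ht => (h₁.hF z hz t ht).fderiv.continuousAt.clm_apply continuousAt_const)
  have hFdc : Continuous (fun p : (Icc (0 : ℝ) 1 × ball (0 : ℂ) τ) × ℝ =>
        fderiv ℂ (hom F₀ F₁ p.1.1) (circleMap 0 ρ p.2, (p.1.2 : ℂ)) (1, 0)) := by
    refine hF'c.congr ?_
    intro p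
    have d0 := (h₀.hF _ (circ_mem ρ hρ p.2) p.1.2 p.1.2.2).differentiableAt
    have d1 := (h₁.hF _ (circ_mem ρ hρ p.2) p.1.2 p.1.2.2).differentiableAt
    have := (d0.hasFDerivAt.add ((d1.hasFDerivAt.sub d0.hasFDerivAt).const_mul ((p.1.1 : ℝ) : ℂ))).fderiv
    have e : hom F₀ F₁ p.1.1 = F₀ + fun y => ((p.1.1 : ℝ) : ℂ) * (F₁ - F₀) y := by
      ext x; simp [hom]
    rw [e, this]
    simp [hom]
  obtain ⟨Q, hQ⟩ := res_family (X := Icc (0 : ℝ) 1 × ball (0 : ℂ) τ)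
    (F := fun p => hom F₀ F₁ p.1) (G := fun p => hom G₀ G₁ p.1)
    (t := fun p => (p.2 : ℂ)) hρ (fun p => hg p.1) (fun p => p.2.2) hFc hFdc
  have hRc : Continuous (fun p : Icc (0 : ℝ) 1 × ball (0 : ℂ) τ =>
      Res (hom F₀ F₁ p.1) (hom G₀ G₁ p.1) ρ p.2) := by
    simp_rw [hQ]
    apply continuous_eval'
    intro j
    apply continuous_const.mul
    exact continuous_psum (X := Icc (0 : ℝ) 1 × ball (0 : ℂ) τ) hρ
      (F := fun p z => hom F₀ F₁ p.1 (z, p.2))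
      (F' := fun p z => fderiv ℂ (hom F₀ F₁ p.1) (z, p.2) (1, 0))
      (G := fun p z => hom G₀ G₁ p.1 (z, p.2)) hFc hFdc hGc
      (fun p z hz => (hg p.1).h0 z hz _ p.2.2) j
  have := card_const' (X := Icc (0 : ℝ) 1) hσ hστ hW (fun s => (hg s).res_diff hρ hτ) hRc hR0 0 1
  simpa [hWdef] using this



lemma ms_bound (Z : Multiset ℂ) (V : Set ℂ) (g : ℂ → ℂ) {x A B : ℝ} (hx : 0 ≤ x) (hA : 0 ≤ A)
    (h1 : ∀ z ∈ Z, z ∈ V → A * x ≤ ‖g z‖ ∧ ‖g z‖ ≤ B * x)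
    (h2 : ∀ z ∈ Z, z ∉ V → A ≤ ‖g z‖ ∧ ‖g z‖ ≤ B) :
    A ^ Z.card * x ^ (Z.filter (fun z => z ∈ V)).card ≤ ‖(Z.map g).prod‖ ∧
    ‖(Z.map g).prod‖ ≤ B ^ Z.card * x ^ (Z.filter (fun z => z ∈ V)).card := by
  induction Z using Multiset.induction_on with
  | empty => simp
  | cons a Z ih =>
    obtain ⟨i1, i2⟩ := ih (fun z hz => h1 z (Multiset.mem_cons_of_mem hz))
      (fun z hz => h2 z (Multiset.mem_cons_of_mem hz))
    rw [Multiset.map_cons, Multiset.prod_cons, norm_mul, Multiset.card_cons]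
    by_cases ha : a ∈ V
    · rw [Multiset.filter_cons_of_pos _ ha, Multiset.card_cons]
      obtain ⟨j1, j2⟩ := h1 a (Multiset.mem_cons_self _ _) ha
      constructor
      · calc _ = (A * x) * (A ^ Z.card * x ^ (Z.filter (fun z => z ∈ V)).card) := by ring
          _ ≤ _ := mul_le_mul j1 i1 (by positivity) (norm_nonneg _)
      · calc _ ≤ (B * x) * (B ^ Z.card * x ^ (Z.filter (fun z => z ∈ V)).card) :=
              mul_le_mul j2 i2 (norm_nonneg _) ((norm_nonneg _).trans j2)
          _ = _ := by ring
    · rw [Multiset.filter_cons_of_neg _ ha]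
      obtain ⟨j1, j2⟩ := h2 a (Multiset.mem_cons_self _ _) ha
      constructor
      · calc _ = A * (A ^ Z.card * x ^ (Z.filter (fun z => z ∈ V)).card) := by ring
          _ ≤ _ := mul_le_mul j1 i1 (by positivity) (norm_nonneg _)
      · calc _ ≤ B * (B ^ Z.card * x ^ (Z.filter (fun z => z ∈ V)).card) :=
              mul_le_mul j2 i2 (norm_nonneg _) ((norm_nonneg _).trans j2)
          _ = _ := by ring

lemma Good.card_roots {F G : ℂ × ℂ → ℂ} {ρ τ : ℝ} (h : Good F G ρ τ) (hρ : 0 < ρ) {t t' : ℂ}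
    (ht : t ∈ ball (0 : ℂ) τ) (ht' : t' ∈ ball (0 : ℂ) τ) :
    (roots F ρ t).card = (roots F ρ t').card := by
  have := preconn_ball 0 τ
  exact card_const (X := ball (0 : ℂ) τ) (c := 0) (ρ := ρ) hρ (F := fun p z => F (z, p))
    (F' := fun p z => fderiv ℂ F (z, p) (1, 0))
    (Z := fun p => roots F ρ p) (fun p => h.fac hρ p.2)
    (fun p z hz => deriv_slice (h.hF z (sphere_subset_closedBall hz) _ p.2).differentiableAt)
    (cont_torus hρ continuous_subtype_val (fun p => p.2)
      (fun z hz t ht => (h.hF z hz t ht).continuousAt))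
    (cont_torus (Φ := fun x => fderiv ℂ F x (1, 0)) hρ continuous_subtype_val (fun p => p.2)
      (fun z hz t ht => (h.hF z hz t ht).fderiv.continuousAt.clm_apply continuousAt_const))
    (fun p z hz => h.h0 z hz _ p.2) ⟨t, ht⟩ ⟨t', ht'⟩

lemma Good.count_of_bounds {F G : ℂ × ℂ → ℂ} {ρ τ σ : ℝ} (h : Good F G ρ τ) (hρ : 0 < ρ)
    (hστ : σ < τ) {W : Multiset ℂ} (hW : IsFac (Res F G ρ) 0 σ W) {c : ℂ}
    (hc : c ∈ ball (0 : ℂ) σ) (V : Set ℂ) (l : ℕ) {M : ℝ} (hM : 0 < M)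
    (h1 : ∀ᶠ t in 𝓝 c, ((roots F ρ t).filter (fun z => z ∈ V)).card = l)
    (h2 : ∀ᶠ t in 𝓝 c, ∀ z ∈ ball (0 : ℂ) ρ, F (z, t) = 0 →
      (z ∈ V → M⁻¹ * ‖t - c‖ ≤ ‖G (z, t)‖ ∧ ‖G (z, t)‖ ≤ M * ‖t - c‖) ∧
      (z ∉ V → M⁻¹ ≤ ‖G (z, t)‖ ∧ ‖G (z, t)‖ ≤ M)) :
    W.count c = l := by
  have hcτ : c ∈ ball (0 : ℂ) τ := ball_subset_ball hστ.le hc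
  refine hW.count_eq hc (A := M⁻¹ ^ (roots F ρ c).card) (B := M ^ (roots F ρ c).card)
    (by positivity) ?_
  apply Filter.Eventually.filter_mono nhdsWithin_le_nhds
  filter_upwards [h1, h2, isOpen_ball.mem_nhds hcτ] with t e1 e2 e3
  have hm := (h.fac hρ e3).mem_iff
  have := ms_bound (roots F ρ t) V (fun z => G (z, t)) (norm_nonneg (t - c)) (inv_pos.mpr hM).le
    (B := M)
    (fun z hz => (e2 z ((hm z).mp hz).1 ((hm z).mp hz).2).1)
    (fun z hz => (e2 z ((hm z).mp hz).1 ((hm z).mp hz).2).2)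
  rw [e1, h.card_roots hρ e3 hcτ] at this
  exact this

lemma far_bound {F G : ℂ × ℂ → ℂ} {K : Set ℂ} (hK : IsCompact K) {c : ℂ}
    (hF : ∀ z ∈ K, ContinuousAt F (z, c)) (hG : ∀ z ∈ K, ContinuousAt G (z, c))
    (h0 : ∀ z ∈ K, F (z, c) = 0 → G (z, c) ≠ 0) :
    ∀ᶠ M : ℝ in atTop, ∀ᶠ t in 𝓝 c, ∀ z ∈ K, F (z, t) = 0 →
      M⁻¹ ≤ ‖G (z, t)‖ ∧ ‖G (z, t)‖ ≤ M := by
  refine hK.induction_on (p := fun s => ∀ᶠ M : ℝ in atTop, ∀ᶠ t in 𝓝 c, ∀ z ∈ s, F (z, t) = 0 →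
      M⁻¹ ≤ ‖G (z, t)‖ ∧ ‖G (z, t)‖ ≤ M) ?_ ?_ ?_ ?_
  · simp
  · intro s s' hs h
    filter_upwards [h] with M hM
    filter_upwards [hM] with t ht z hz
    exact ht z (hs hz)
  · intro s s' h h'
    filter_upwards [h, h'] with M hM hM'
    filter_upwards [hM, hM'] with t ht ht' z hz
    rcases hz with hz | hz
    · exact ht z hz
    · exact ht' z hz
  · intro z hz
    by_cases hFz : F (z, c) = 0
    · have hGz := h0 z hz hFz
      have hpos : 0 < ‖G (z, c)‖ := norm_pos_iff.mpr hGz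
      have e1 : ∀ᶠ x in 𝓝 (z, c), ‖G (z, c)‖ / 2 < ‖G x‖ :=
        (hG z hz).norm.eventually (lt_mem_nhds (by linarith))
      have e2 : ∀ᶠ x in 𝓝 (z, c), ‖G x‖ < 2 * ‖G (z, c)‖ :=
        (hG z hz).norm.eventually (gt_mem_nhds (by linarith))
      rw [nhds_prod_eq] at e1 e2
      obtain ⟨pa, hpa, pb, hpb, hp⟩ := Filter.eventually_prod_iff.mp (e1.and e2)
      refine ⟨{z | pa z}, mem_nhdsWithin_of_mem_nhds hpa, ?_⟩
      filter_upwards [eventually_ge_atTop (2 * ‖G (z, c)‖), eventually_ge_atTop (2 / ‖G (z, c)‖),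
        eventually_gt_atTop 0] with M hM1 hM2 hM0
      filter_upwards [hpb] with t ht y hy _
      obtain ⟨k1, k2⟩ := hp hy ht
      refine ⟨?_, by linarith⟩
      have : M⁻¹ ≤ ‖G (z, c)‖ / 2 := by
        rw [inv_le_comm₀ hM0 (by positivity)]
        convert hM2 using 1
        rw [inv_div]
      linarith
    · have e1 : ∀ᶠ x in 𝓝 (z, c), F x ≠ 0 := (hF z hz).eventually_ne hFz
      rw [nhds_prod_eq] at e1
      obtain ⟨pa, hpa, pb, hpb, hp⟩ := Filter.eventually_prod_iff.mp e1
      refine ⟨{z | pa z}, mem_nhdsWithin_of_mem_nhds hpa, ?_⟩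
      refine Eventually.of_forall fun M => ?_
      filter_upwards [hpb] with t ht y hy h
      exact absurd h (hp hy ht)

lemma inj_bound (L : ℂ × ℂ →L[ℂ] ℂ × ℂ) (hL : ∀ v, L v = 0 → v = 0) :
    ∃ κ > 0, ∀ v, κ * ‖v‖ ≤ ‖L v‖ := by
  obtain ⟨K, hK, hK'⟩ := LinearMap.exists_antilipschitzWith (L : ℂ × ℂ →ₗ[ℂ] ℂ × ℂ)
    (LinearMap.ker_eq_bot'.mpr hL)
  refine ⟨(K : ℝ)⁻¹, by positivity, fun v => ?_⟩
  have := hK'.le_mul_dist v 0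
  simp at this
  rw [inv_mul_le_iff₀ (by positivity)]
  exact this

lemma local_bound {F G : ℂ × ℂ → ℂ} {ξ c : ℂ} (hF : DifferentiableAt ℂ F (ξ, c))
    (hG : DifferentiableAt ℂ G (ξ, c)) (hF0 : F (ξ, c) = 0) (hG0 : G (ξ, c) = 0)
    (h1 : fderiv ℂ F (ξ, c) (1, 0) ≠ 0)
    (hinj : ∀ v, fderiv ℂ F (ξ, c) v = 0 → fderiv ℂ G (ξ, c) v = 0 → v = 0) :
    ∀ᶠ M : ℝ in atTop, ∀ᶠ x in 𝓝 (ξ, c), F x = 0 →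
      M⁻¹ * ‖x.2 - c‖ ≤ ‖G x‖ ∧ ‖G x‖ ≤ M * ‖x.2 - c‖ := by
  set DF := fderiv ℂ F (ξ, c)
  set DG := fderiv ℂ G (ξ, c)
  obtain ⟨κ, hκ, hκ'⟩ := inj_bound (DF.prod DG) (fun v hv => by
    simp only [ContinuousLinearMap.prod_apply, Prod.mk_eq_zero] at hv
    exact hinj v hv.1 hv.2)
  obtain ⟨κ₂, hκ₂, hκ₂'⟩ := inj_bound (DF.prod (ContinuousLinearMap.snd ℂ ℂ ℂ)) (fun v hv => by
    simp only [ContinuousLinearMap.prod_apply, Prod.mk_eq_zero, ContinuousLinearMap.coe_snd'] at hv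
    have e : v = v.1 • ((1 : ℂ), (0 : ℂ)) := by
      ext <;> simp [hv.2]
    have h3 := hv.1
    rw [e, map_smul, smul_eq_mul] at h3
    rcases mul_eq_zero.mp h3 with h | h
    · ext
      · exact h
      · exact hv.2
    · exact absurd h h1)
  set η := min (κ / 2) (κ₂ / 2) with hη
  have hηp : 0 < η := by positivity
  have eF := hF.hasFDerivAt.isLittleO.def hηp
  have eG := hG.hasFDerivAt.isLittleO.def hηp
  filter_upwards [eventually_ge_atTop (2 / κ), eventually_ge_atTop ((‖DG‖ + η) / κ₂),
    eventually_gt_atTop 0] with M hM1 hM2 hM0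
  filter_upwards [eF, eG] with x xF xG hx
  rw [hx, hF0, sub_zero, zero_sub, norm_neg] at xF
  rw [hG0, sub_zero] at xG
  have hηκ : η ≤ κ / 2 := min_le_left _ _
  have hηκ₂ : η ≤ κ₂ / 2 := min_le_right _ _
  set v := x - (ξ, c) with hv
  have hn := norm_nonneg v
  have hv2 : ‖v.2‖ ≤ ‖v‖ := norm_snd_le v
  have hv2' : v.2 = x.2 - c := rfl
  rw [← hv2']
  have a1 := hκ' v
  have a2 := hκ₂' v
  simp only [ContinuousLinearMap.prod_apply, Prod.norm_mk, ContinuousLinearMap.coe_snd'] at a1 a2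
  have b1 : ‖G x‖ ≤ ‖DG v‖ + η * ‖v‖ := by
    have : ‖G x‖ ≤ ‖G x - DG v‖ + ‖DG v‖ := by
      simpa using norm_add_le (G x - DG v) (DG v)
    linarith
  have b2 : ‖DG v‖ ≤ ‖G x‖ + η * ‖v‖ := by
    have : ‖DG v‖ ≤ ‖G x - DG v‖ + ‖G x‖ := by
      have := norm_sub_le (G x) (G x - DG v)
      simp at this; linarith
    linarith
  have b3 : ‖DG v‖ ≤ ‖DG‖ * ‖v‖ := DG.le_opNorm v
  have c1 : η * ‖v‖ ≤ κ / 2 * ‖v‖ := by gcongr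
  have c2 : η * ‖v‖ ≤ κ₂ / 2 * ‖v‖ := by gcongr
  have d1 : κ / 2 * ‖v‖ ≤ ‖G x‖ := by
    rcases le_max_iff.mp a1 with h | h
    · have : κ / 2 * ‖v‖ ≤ 0 := by linarith
      exact this.trans (norm_nonneg _)
    · linarith
  have d2 : κ₂ * ‖v‖ ≤ ‖v.2‖ := by
    rcases le_max_iff.mp a2 with h | h
    · have h4 : κ₂ / 2 * ‖v‖ ≤ 0 := by linarith
      have : κ₂ * ‖v‖ ≤ 0 := by linarith
      exact this.trans (norm_nonneg _)
    · exact h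
  constructor
  · rw [inv_mul_le_iff₀ hM0]
    have : 1 ≤ M * (κ / 2) := by
      rw [div_le_iff₀ hκ] at hM1; linarith
    calc ‖v.2‖ ≤ 1 * ‖v‖ := by linarith
      _ ≤ M * (κ / 2) * ‖v‖ := by gcongr
      _ = M * (κ / 2 * ‖v‖) := by ring
      _ ≤ M * ‖G x‖ := by gcongr
  · calc ‖G x‖ ≤ (‖DG‖ + η) * ‖v‖ := by linarith
      _ ≤ (M * κ₂) * ‖v‖ := by
        gcongr
        rwa [div_le_iff₀ hκ₂] at hM2
      _ = M * (κ₂ * ‖v‖) := by ring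
      _ ≤ M * ‖v.2‖ := by gcongr

lemma deriv_bounds {f : ℂ → ℂ} {ξ : ℂ} (hf : DifferentiableAt ℂ f ξ) (h0 : f ξ = 0)
    (hd : deriv f ξ ≠ 0) :
    ∀ᶠ z in 𝓝 ξ, ‖deriv f ξ‖ / 2 * ‖z - ξ‖ ≤ ‖f z‖ ∧ ‖f z‖ ≤ 2 * ‖deriv f ξ‖ * ‖z - ξ‖ := by
  have hp : 0 < ‖deriv f ξ‖ := norm_pos_iff.mpr hd
  have := (hasDerivAt_iff_isLittleO.mp hf.hasDerivAt).def (half_pos hp)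
  filter_upwards [this] with z hz
  rw [h0, sub_zero, smul_eq_mul] at hz
  have h1 : ‖(z - ξ) * deriv f ξ‖ = ‖deriv f ξ‖ * ‖z - ξ‖ := by rw [norm_mul, mul_comm]
  have h2 := norm_sub_norm_le ((z - ξ) * deriv f ξ) (f z)
  rw [norm_sub_rev] at h2
  have h3 := norm_sub_norm_le (f z) ((z - ξ) * deriv f ξ)
  have h4 : 0 ≤ ‖deriv f ξ‖ * ‖z - ξ‖ := by positivity
  constructor <;> nlinarith

lemma Good.one_root {F G : ℂ × ℂ → ℂ} {ρ τ : ℝ} (h : Good F G ρ τ) (hρ : 0 < ρ) {c ξ : ℂ} {ε : ℝ}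
    (hc : c ∈ ball (0 : ℂ) τ) (hε : 0 < ε) (hsub : closedBall ξ (2 * ε) ⊆ ball 0 ρ)
    (hF0 : F (ξ, c) = 0) (hd : fderiv ℂ F (ξ, c) (1, 0) ≠ 0)
    (hiso : ∀ z ∈ closedBall ξ ε, F (z, c) = 0 → z = ξ) :
    ∀ᶠ t in 𝓝 c, ((roots F ρ t).filter (fun z => z ∈ ball ξ ε)).card = 1 := by
  have hsub1 : closedBall ξ ε ⊆ ball 0 ρ :=
    (closedBall_subset_closedBall (by linarith)).trans hsub
  have hξ : ξ ∈ ball (0 : ℂ) ρ := hsub1 (mem_closedBall_self hε.le)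
  have hsc : ∀ z ∈ sphere ξ ε, F (z, c) ≠ 0 := by
    intro z hz h0
    have := hiso z (sphere_subset_closedBall hz) h0
    rw [this, mem_sphere, dist_self] at hz; linarith
  have hsubK : closedBall ξ ε ⊆ closedBall 0 ρ := hsub1.trans ball_subset_closedBall
  -- at `c`
  have hcard : ((roots F ρ c).filter (fun z => z ∈ ball ξ ε)).card = 1 := by
    have hfac := (h.fac hρ hc).sub hsubK hsc
    have hda := (h.hF ξ (ball_subset_closedBall hξ) c hc)
    have hder := deriv_slice hda.differentiableAt
    have hcnt := hfac.count_eq (w := ξ) (mem_ball_self hε) (l := 1)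
      (A := ‖deriv (fun z => F (z, c)) ξ‖ / 2) (B := 2 * ‖deriv (fun z => F (z, c)) ξ‖)
      (by rw [hder]; have := norm_pos_iff.mpr hd; positivity)
      (by
        apply Filter.Eventually.filter_mono nhdsWithin_le_nhds
        simpa using deriv_bounds (an_slice hda).differentiableAt hF0 (by rw [hder]; exact hd))
    have hall : ∀ z ∈ (roots F ρ c).filter (fun z => z ∈ ball ξ ε), z = ξ := by
      intro z hz
      have := (hfac.mem_iff z).mp hz
      exact hiso z (ball_subset_closedBall this.1) this.2
    rw [Multiset.eq_replicate_card.mpr hall, Multiset.count_replicate_self] at hcnt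
    exact hcnt
  have hev : ∀ᶠ t in 𝓝 c, ∀ z ∈ sphere ξ ε, F (z, t) ≠ 0 := by
    apply (isCompact_sphere ξ ε).eventually_forall_of_forall_eventually
    intro z hz
    have hca := (h.hF z (hsubK (sphere_subset_closedBall hz)) c hc).continuousAt
    exact (continuous_swap.continuousAt.tendsto (x := (c, z))).eventually (hca.eventually_ne (hsc z hz))
  obtain ⟨δ, hδ, hδ'⟩ := Metric.mem_nhds_iff.mp (hev.and (isOpen_ball.mem_nhds hc))
  have hδ1 : ∀ t ∈ ball c δ, ∀ z ∈ sphere ξ ε, F (z, t) ≠ 0 := fun t ht => (hδ' ht).1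
  have hδ2 : ∀ t ∈ ball c δ, t ∈ ball (0 : ℂ) τ := fun t ht => (hδ' ht).2
  have hmem2 : ∀ z ∈ ball ξ (2 * ε), z ∈ closedBall (0 : ℂ) ρ := fun z hz =>
    ball_subset_closedBall (hsub (ball_subset_closedBall hz))
  have := preconn_ball c δ
  filter_upwards [ball_mem_nhds c hδ] with t ht
  rw [← hcard]
  refine card_const' (X := ball c δ) (c := ξ) (σ := ε) (τ := 2 * ε) hε (by linarith)
    (f := fun p z => F (z, p)) (Z := fun p => (roots F ρ p).filter (fun z => z ∈ ball ξ ε))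
    (fun p => (h.fac hρ (hδ2 p p.2)).sub hsubK (hδ1 p p.2)) ?_ ?_ (fun p => hδ1 p p.2)
    ⟨t, ht⟩ ⟨c, mem_ball_self hδ⟩
  · intro p z hz
    exact (an_slice (h.hF z (hmem2 z hz) p (hδ2 p p.2))).differentiableAt.differentiableWithinAt
  · rw [continuous_iff_continuousAt]
    intro p
    exact ContinuousAt.comp (f := fun p : ball c δ × ball ξ (2 * ε) => ((p.2 : ℂ), (p.1 : ℂ)))
      (h.hF p.2 (hmem2 p.2 p.2.2) p.1 (hδ2 p.1 p.1.2)).continuousAt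
      (Continuous.continuousAt (by fun_prop))

lemma card_filter_union (Z : Multiset ℂ) (S : Finset ℂ) (ε : ℝ)
    (hdis : ∀ x ∈ S, ∀ y ∈ S, x ≠ y → Disjoint (ball x ε) (ball y ε)) :
    (Z.filter (fun z => z ∈ ⋃ ξ ∈ S, ball ξ ε)).card
      = ∑ ξ ∈ S, (Z.filter (fun z => z ∈ ball ξ ε)).card := by
  induction Z using Multiset.induction_on with
  | empty => simp
  | cons a Z ih =>
    simp_rw [Multiset.filter_cons, Multiset.card_add, Finset.sum_add_distrib]
    rw [ih]
    congr 1
    by_cases ha : a ∈ ⋃ ξ ∈ S, ball ξ ε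
    · rw [if_pos ha]
      simp only [mem_iUnion] at ha
      obtain ⟨ξ, hξ, ha⟩ := ha
      rw [Finset.sum_eq_single_of_mem ξ hξ]
      · rw [if_pos ha]
      · intro b hb hne
        rw [if_neg]; · simp
        intro hab
        exact Set.disjoint_left.mp (hdis b hb ξ hξ hne) hab ha
    · rw [if_neg ha]
      symm
      simp only [mem_iUnion, not_exists] at ha
      rw [Multiset.card_zero]
      apply Finset.sum_eq_zero
      intro ξ hξ
      rw [if_neg (ha ξ hξ)]; simp

lemma Good.count_simple {F G : ℂ × ℂ → ℂ} {ρ τ σ : ℝ} (h : Good F G ρ τ) (hρ : 0 < ρ)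
    (hστ : σ < τ) {W : Multiset ℂ} (hW : IsFac (Res F G ρ) 0 σ W) {c : ℂ}
    (hc : c ∈ ball (0 : ℂ) σ) (S : Finset ℂ)
    (hS : ∀ ξ, ξ ∈ S ↔ ξ ∈ ball (0 : ℂ) ρ ∧ F (ξ, c) = 0 ∧ G (ξ, c) = 0)
    (hd : ∀ ξ ∈ S, fderiv ℂ F (ξ, c) (1, 0) ≠ 0)
    (hinj : ∀ ξ ∈ S, ∀ v, fderiv ℂ F (ξ, c) v = 0 → fderiv ℂ G (ξ, c) v = 0 → v = 0) :
    W.count c = S.card := by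
  have hcτ : c ∈ ball (0 : ℂ) τ := ball_subset_ball hστ.le hc
  have hSb : ∀ ξ ∈ S, ξ ∈ closedBall (0 : ℂ) ρ := fun ξ hξ => ball_subset_closedBall ((hS ξ).mp hξ).1
  have hM1 : ∀ᶠ M : ℝ in atTop, ∀ ξ ∈ S, ∀ᶠ x in 𝓝 (ξ, c), F x = 0 →
      M⁻¹ * ‖x.2 - c‖ ≤ ‖G x‖ ∧ ‖G x‖ ≤ M * ‖x.2 - c‖ := by
    rw [Filter.eventually_all_finset]
    intro ξ hξ
    exact local_bound (h.hF ξ (hSb ξ hξ) c hcτ).differentiableAt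
      (h.hG ξ (hSb ξ hξ) c hcτ).differentiableAt ((hS ξ).mp hξ).2.1 ((hS ξ).mp hξ).2.2
      (hd ξ hξ) (hinj ξ hξ)
  obtain ⟨M₁, hM₁, hM₁0⟩ := (hM1.and (eventually_gt_atTop 0)).exists
  have hε : ∀ᶠ ε : ℝ in 𝓝[>] 0, ∀ ξ ∈ S, closedBall ξ (2 * ε) ⊆ ball 0 ρ ∧
      (∀ z ∈ closedBall ξ ε, F (z, c) = 0 → z = ξ) ∧
      (∀ᶠ t in 𝓝 c, ∀ z ∈ ball ξ ε, F (z, t) = 0 →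
        M₁⁻¹ * ‖t - c‖ ≤ ‖G (z, t)‖ ∧ ‖G (z, t)‖ ≤ M₁ * ‖t - c‖) ∧
      (∀ y ∈ S, ξ ≠ y → Disjoint (ball ξ ε) (ball y ε)) := by
    rw [Filter.eventually_all_finset]
    intro ξ hξ
    have hξb := ((hS ξ).mp hξ).1
    have sm : ∀ r > (0 : ℝ), ∀ᶠ ε : ℝ in 𝓝[>] 0, 2 * ε < r := by
      intro r hr
      filter_upwards [Ioo_mem_nhdsGT (show (0 : ℝ) < r / 2 by linarith)] with ε hε
      linarith [hε.2]
    have p1 : ∀ᶠ ε : ℝ in 𝓝[>] 0, closedBall ξ (2 * ε) ⊆ ball 0 ρ := by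
      obtain ⟨r, hr, hr'⟩ := Metric.mem_nhds_iff.mp (isOpen_ball.mem_nhds hξb)
      filter_upwards [sm r hr] with ε hε
      exact (closedBall_subset_ball hε).trans hr'
    have p2 : ∀ᶠ ε : ℝ in 𝓝[>] 0, ∀ z ∈ closedBall ξ ε, F (z, c) = 0 → z = ξ := by
      have hda := h.hF ξ (hSb ξ hξ) c hcτ
      have hder := deriv_slice hda.differentiableAt
      have hb := deriv_bounds (an_slice hda).differentiableAt ((hS ξ).mp hξ).2.1
        (by rw [hder]; exact hd ξ hξ)
      have hpos : 0 < ‖deriv (fun z => F (z, c)) ξ‖ := by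
        rw [hder]; exact norm_pos_iff.mpr (hd ξ hξ)
      obtain ⟨r, hr, hr'⟩ := Metric.mem_nhds_iff.mp hb
      filter_upwards [sm r hr, self_mem_nhdsWithin] with ε hε hε0 z hz hFz
      have hε0' : 0 < ε := hε0
      have h5 := (hr' (show z ∈ ball ξ r from closedBall_subset_ball (by linarith) hz)).1
      rw [hFz, norm_zero] at h5
      have h6 : ‖z - ξ‖ ≤ 0 := by
        by_contra h7
        push Not at h7
        have := mul_pos (half_pos hpos) h7
        linarith
      exact sub_eq_zero.mp (norm_le_zero_iff.mp h6)
    have p3 : ∀ᶠ ε : ℝ in 𝓝[>] 0, ∀ᶠ t in 𝓝 c, ∀ z ∈ ball ξ ε, F (z, t) = 0 →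
        M₁⁻¹ * ‖t - c‖ ≤ ‖G (z, t)‖ ∧ ‖G (z, t)‖ ≤ M₁ * ‖t - c‖ := by
      obtain ⟨r, hr, hr'⟩ := Metric.mem_nhds_iff.mp (hM₁ ξ hξ)
      filter_upwards [sm r hr, self_mem_nhdsWithin] with ε hε hε0
      have hε0' : 0 < ε := hε0
      filter_upwards [ball_mem_nhds c hr] with t ht z hz hF
      refine hr' (show (z, t) ∈ ball (ξ, c) r from ?_) hF
      rw [← ball_prod_same]
      exact ⟨ball_subset_ball (by linarith) hz, ht⟩
    have p4 : ∀ᶠ ε : ℝ in 𝓝[>] 0, ∀ y ∈ S, ξ ≠ y → Disjoint (ball ξ ε) (ball y ε) := by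
      rw [Filter.eventually_all_finset]
      intro y _
      by_cases hy : ξ = y
      · simp [hy]
      · filter_upwards [sm _ (dist_pos.mpr hy)] with ε hε _
        exact ball_disjoint_ball (by linarith)
    filter_upwards [p1, p2, p3, p4] with ε a b d e
    exact ⟨a, b, d, e⟩
  obtain ⟨ε, hε1, hε0⟩ := (hε.and self_mem_nhdsWithin).exists
  have hε0' : 0 < ε := hε0
  set V : Set ℂ := ⋃ ξ ∈ S, ball ξ ε with hV
  have hVo : IsOpen V := isOpen_biUnion fun _ _ => isOpen_ball
  have hK : IsCompact (closedBall (0 : ℂ) ρ \ V) := (isCompact_closedBall 0 ρ).diff hVo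
  have hfar := far_bound (F := F) (G := G) hK (c := c)
    (fun z hz => (h.hF z hz.1 c hcτ).continuousAt) (fun z hz => (h.hG z hz.1 c hcτ).continuousAt)
    (fun z hz hFz hGz => by
      have hzb : z ∈ ball (0 : ℂ) ρ := by
        rcases (mem_closedBall.mp hz.1).lt_or_eq with h' | h'
        · exact h'
        · exact absurd hFz (h.h0 z h' c hcτ)
      apply hz.2
      simp only [hV, mem_iUnion]
      exact ⟨z, (hS z).mpr ⟨hzb, hFz, hGz⟩, mem_ball_self hε0'⟩)
  obtain ⟨M, hM, hMM₁⟩ := (hfar.and (eventually_ge_atTop M₁)).exists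
  have hM0 : 0 < M := hM₁0.trans_le hMM₁
  refine h.count_of_bounds hρ hστ hW hc V S.card hM0 ?_ ?_
  · have : ∀ᶠ t in 𝓝 c, ∀ ξ ∈ S, ((roots F ρ t).filter (fun z => z ∈ ball ξ ε)).card = 1 := by
      rw [Filter.eventually_all_finset]
      intro ξ hξ
      exact h.one_root hρ hcτ hε0' (hε1 ξ hξ).1 ((hS ξ).mp hξ).2.1 (hd ξ hξ) (hε1 ξ hξ).2.1
    filter_upwards [this] with t ht
    rw [hV, card_filter_union _ _ _ (fun x hx y hy hxy => (hε1 x hx).2.2.2 y hy hxy),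
      Finset.sum_congr rfl ht]
    simp
  · have : ∀ᶠ t in 𝓝 c, ∀ ξ ∈ S, ∀ z ∈ ball ξ ε, F (z, t) = 0 →
        M₁⁻¹ * ‖t - c‖ ≤ ‖G (z, t)‖ ∧ ‖G (z, t)‖ ≤ M₁ * ‖t - c‖ := by
      rw [Filter.eventually_all_finset]
      exact fun ξ hξ => (hε1 ξ hξ).2.2.1
    filter_upwards [this, hM] with t ht ht' z hz hFz
    refine ⟨fun hzV => ?_, fun hzV => ht' z ⟨ball_subset_closedBall hz, hzV⟩ hFz⟩
    simp only [hV, mem_iUnion] at hzV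
    obtain ⟨ξ, hξ, hzξ⟩ := hzV
    obtain ⟨q1, q2⟩ := ht ξ hξ z hzξ hFz
    refine ⟨le_trans ?_ q1, q2.trans ?_⟩
    · gcongr
    · gcongr

/-- The number of (simple) solutions is the number of zeros of the resultant. -/
lemma Good.ncard_eq {F G : ℂ × ℂ → ℂ} {ρ τ σ : ℝ} (h : Good F G ρ τ) (hρ : 0 < ρ)
    (hστ : σ < τ) {W : Multiset ℂ} (hW : IsFac (Res F G ρ) 0 σ W)
    (hd : ∀ x : ℂ × ℂ, x.1 ∈ ball (0 : ℂ) ρ → x.2 ∈ ball (0 : ℂ) σ → F x = 0 → G x = 0 →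
      fderiv ℂ F x (1, 0) ≠ 0 ∧ ∀ v, fderiv ℂ F x v = 0 → fderiv ℂ G x v = 0 → v = 0) :
    {x : ℂ × ℂ | (x.1 ∈ ball (0 : ℂ) ρ ∧ x.2 ∈ ball (0 : ℂ) σ) ∧ F x = 0 ∧ G x = 0}.ncard
      = W.card := by
  set S : ℂ → Finset ℂ := fun c => (roots F ρ c).toFinset.filter (fun z => G (z, c) = 0) with hSdef
  have hS : ∀ c ∈ ball (0 : ℂ) σ, ∀ ξ, ξ ∈ S c ↔ ξ ∈ ball (0 : ℂ) ρ ∧ F (ξ, c) = 0 ∧ G (ξ, c) = 0 := by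
    intro c hc ξ
    rw [hSdef, Finset.mem_filter, Multiset.mem_toFinset,
      (h.fac hρ (ball_subset_ball hστ.le hc)).mem_iff]
    tauto
  have hcnt : ∀ c ∈ ball (0 : ℂ) σ, W.count c = (S c).card := by
    intro c hc
    refine h.count_simple hρ hστ hW hc (S c) (hS c hc) ?_ ?_
    · intro ξ hξ
      obtain ⟨a, b, d⟩ := (hS c hc ξ).mp hξ
      exact (hd (ξ, c) a hc b d).1
    · intro ξ hξ
      obtain ⟨a, b, d⟩ := (hS c hc ξ).mp hξ
      exact (hd (ξ, c) a hc b d).2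
  have hset : {x : ℂ × ℂ | (x.1 ∈ ball (0 : ℂ) ρ ∧ x.2 ∈ ball (0 : ℂ) σ) ∧ F x = 0 ∧ G x = 0}
      = ((W.toFinset.sigma S).image (fun p => (p.2, p.1)) : Finset (ℂ × ℂ)) := by
    ext x
    simp only [mem_setOf_eq, Finset.coe_image, Set.mem_image, Finset.mem_coe, Finset.mem_sigma,
      Multiset.mem_toFinset]
    constructor
    · rintro ⟨⟨a, b⟩, c, d⟩
      have hx : x.1 ∈ S x.2 := (hS x.2 b x.1).mpr ⟨a, c, d⟩
      refine ⟨⟨x.2, x.1⟩, ⟨?_, hx⟩, rfl⟩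
      rw [← Multiset.count_pos, hcnt x.2 b]
      exact Finset.card_pos.mpr ⟨_, hx⟩
    · rintro ⟨p, ⟨a, b⟩, rfl⟩
      have hp := hW.1 _ a
      obtain ⟨q1, q2, q3⟩ := (hS _ hp _).mp b
      exact ⟨⟨q1, hp⟩, q2, q3⟩
  rw [hset, Set.ncard_coe_finset, Finset.card_image_of_injective, Finset.card_sigma,
    ← Multiset.toFinset_sum_count_eq]
  · apply Finset.sum_congr rfl
    intro c hc
    rw [hcnt c (hW.1 c (Multiset.mem_toFinset.mp hc))]
  · rintro ⟨a, b⟩ ⟨c, d⟩ hpq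
    simp only [Prod.mk.injEq] at hpq
    obtain ⟨rfl, rfl⟩ := hpq
    rfl



/-- A pair with quantitative nonvanishing on the relevant boundary pieces. -/
structure Setup (H K : ℂ × ℂ → ℂ) (ρ τ σ η : ℝ) : Prop where
  hσ : 0 < σ
  hστ : σ < τ
  hτρ : τ ≤ ρ
  hη : 0 < η
  hH : ∀ x : ℂ × ℂ, x.1 ∈ closedBall (0 : ℂ) ρ → x.2 ∈ closedBall (0 : ℂ) ρ → AnalyticAt ℂ H x
  hK : ∀ x : ℂ × ℂ, x.1 ∈ closedBall (0 : ℂ) ρ → x.2 ∈ closedBall (0 : ℂ) ρ → AnalyticAt ℂ K x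
  hs : ∀ z ∈ sphere (0 : ℂ) ρ, ∀ t ∈ ball (0 : ℂ) τ, η ≤ ‖H (z, t)‖
  hb : ∀ x : ℂ × ℂ, x.1 ∈ closedBall (0 : ℂ) ρ → x.2 ∈ closedBall (0 : ℂ) ρ →
    ¬ (x.1 ∈ ball (0 : ℂ) ρ ∧ x.2 ∈ ball (0 : ℂ) σ) → η ≤ ‖H x‖ ∨ η ≤ ‖K x‖

lemma Good.res_zero {F G : ℂ × ℂ → ℂ} {ρ τ : ℝ} (h : Good F G ρ τ) (hρ : 0 < ρ) {t : ℂ}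
    (ht : t ∈ ball (0 : ℂ) τ) :
    Res F G ρ t = 0 ↔ ∃ z ∈ ball (0 : ℂ) ρ, F (z, t) = 0 ∧ G (z, t) = 0 := by
  rw [Res, Multiset.prod_eq_zero_iff, Multiset.mem_map]
  constructor
  · rintro ⟨z, hz, h2⟩
    rw [(h.fac hρ ht).mem_iff] at hz
    exact ⟨z, hz.1, hz.2, h2⟩
  · rintro ⟨z, hz, h1, h2⟩
    exact ⟨z, ((h.fac hρ ht).mem_iff z).mpr ⟨hz, h1⟩, h2⟩

lemma Good.exists_W {F G : ℂ × ℂ → ℂ} {ρ τ σ : ℝ} (h : Good F G ρ τ) (hρ : 0 < ρ)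
    (hσ : 0 < σ) (hστ : σ < τ)
    (hside : ∀ z ∈ ball (0 : ℂ) ρ, ∀ t ∈ sphere (0 : ℂ) σ, F (z, t) = 0 → G (z, t) ≠ 0) :
    ∃ W, IsFac (Res F G ρ) 0 σ W := by
  have hsub : closedBall (0 : ℂ) σ ⊆ ball 0 τ := closedBall_subset_ball hστ
  refine exists_fac hσ ?_ ?_
  · have := (h.res_diff hρ (hσ.trans hστ)).analyticOnNhd isOpen_ball
    exact this.mono hsub
  · intro t ht h0
    rw [h.res_zero hρ (hsub (sphere_subset_closedBall ht))] at h0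
    obtain ⟨z, hz, h1, h2⟩ := h0
    exact hside z hz t ht h1 h2

lemma Setup.pert {H K F G : ℂ × ℂ → ℂ} {ρ τ σ η : ℝ} (S : Setup H K ρ τ σ η)
    (hF : ∀ x : ℂ × ℂ, x.1 ∈ closedBall (0 : ℂ) ρ → x.2 ∈ closedBall (0 : ℂ) ρ → AnalyticAt ℂ F x)
    (hG : ∀ x : ℂ × ℂ, x.1 ∈ closedBall (0 : ℂ) ρ → x.2 ∈ closedBall (0 : ℂ) ρ → AnalyticAt ℂ G x)
    (hFH : ∀ x : ℂ × ℂ, x.1 ∈ closedBall (0 : ℂ) ρ → x.2 ∈ closedBall (0 : ℂ) ρ →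
      ‖F x - H x‖ < η)
    (hGK : ∀ x : ℂ × ℂ, x.1 ∈ closedBall (0 : ℂ) ρ → x.2 ∈ closedBall (0 : ℂ) ρ →
      ‖G x - K x‖ < η) :
    Good F G ρ τ ∧ (∃ W, IsFac (Res F G ρ) 0 σ W) ∧
    (∀ W W', IsFac (Res H K ρ) 0 σ W → IsFac (Res F G ρ) 0 σ W' → W'.card = W.card) ∧
    (∀ x : ℂ × ℂ, x.1 ∈ closedBall (0 : ℂ) ρ → x.2 ∈ closedBall (0 : ℂ) ρ → F x = 0 → G x = 0 →
      x.1 ∈ ball (0 : ℂ) ρ ∧ x.2 ∈ ball (0 : ℂ) σ) := by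
  have hρ : 0 < ρ := S.hσ.trans (S.hστ.trans_le S.hτρ)
  have hsm : ball (0 : ℂ) τ ⊆ closedBall 0 ρ :=
    (ball_subset_ball S.hτρ).trans ball_subset_closedBall
  have key : ∀ (A B : ℂ) (s : ℝ), s ∈ Icc (0 : ℝ) 1 → ‖B - A‖ < η → A + (s : ℂ) * (B - A) = 0 →
      ‖A‖ < η := by
    intro A B s hs hAB h0
    have : A = - ((s : ℂ) * (B - A)) := by linear_combination h0
    rw [this, norm_neg, norm_mul, Complex.norm_real, Real.norm_of_nonneg hs.1]
    nlinarith [hs.1, hs.2, norm_nonneg (B - A)]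
  have hz : ∀ s ∈ Icc (0 : ℝ) 1, ∀ z ∈ sphere (0 : ℂ) ρ, ∀ t ∈ ball (0 : ℂ) τ,
      hom H F s (z, t) ≠ 0 := by
    intro s hs z hz t ht h0
    have := key (H (z, t)) (F (z, t)) s hs
      (hFH (z, t) (sphere_subset_closedBall hz) (hsm ht)) h0
    exact absurd (S.hs z hz t ht) (not_le.mpr this)
  have hall : ∀ s ∈ Icc (0 : ℝ) 1, ∀ x : ℂ × ℂ, x.1 ∈ closedBall (0 : ℂ) ρ →
      x.2 ∈ closedBall (0 : ℂ) ρ → hom H F s x = 0 → hom K G s x = 0 →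
      x.1 ∈ ball (0 : ℂ) ρ ∧ x.2 ∈ ball (0 : ℂ) σ := by
    intro s hs x h1 h2 h3 h4
    by_contra hc
    rcases S.hb x h1 h2 hc with h | h
    · exact absurd h (not_le.mpr (key _ _ s hs (hFH x h1 h2) h3))
    · exact absurd h (not_le.mpr (key _ _ s hs (hGK x h1 h2) h4))
  have h1F : ∀ A B : ℂ × ℂ → ℂ, hom A B 1 = B := by
    intro A B; funext x; simp [hom]
  have hside : ∀ s ∈ Icc (0 : ℝ) 1, ∀ z ∈ closedBall (0 : ℂ) ρ, ∀ t ∈ sphere (0 : ℂ) σ,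
      hom H F s (z, t) = 0 → hom K G s (z, t) ≠ 0 := by
    intro s hs z hz t ht h3 h4
    have := (hall s hs (z, t) hz (closedBall_subset_closedBall (S.hστ.le.trans S.hτρ)
      (sphere_subset_closedBall ht)) h3 h4).2
    simp at ht this
    linarith
  have hgood : Good F G ρ τ := ⟨fun z hz t ht => hF _ hz (hsm ht), fun z hz t ht => hG _ hz (hsm ht),
    fun z hz' t ht => by simpa [h1F] using hz 1 (by simp) z hz' t ht⟩
  have hgood0 : Good H K ρ τ := ⟨fun z hz t ht => S.hH _ hz (hsm ht),
    fun z hz t ht => S.hK _ hz (hsm ht),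
    fun z hz' t ht => by simpa [hom] using hz 0 (by simp) z hz' t ht⟩
  refine ⟨hgood, ?_, ?_, ?_⟩
  · refine hgood.exists_W hρ S.hσ S.hστ fun z hz t ht => ?_
    simpa [h1F] using hside 1 (by simp) z (ball_subset_closedBall hz) t ht
  · intro W W' hW hW'
    exact (homotopy hρ S.hσ S.hστ hgood0 hgood hz hside hW hW').symm
  · intro x h1 h2 h3 h4
    exact hall 1 (by simp) x h1 h2 (by simpa [h1F] using h3) (by simpa [h1F] using h4)

lemma Setup.self {H K : ℂ × ℂ → ℂ} {ρ τ σ η : ℝ} (S : Setup H K ρ τ σ η) :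
    Good H K ρ τ ∧ ∃ W, IsFac (Res H K ρ) 0 σ W := by
  have := S.pert S.hH S.hK (fun x _ _ => by simpa using S.hη) (fun x _ _ => by simpa using S.hη)
  exact ⟨this.1, this.2.1⟩

lemma Good.finite_zeros {F G : ℂ × ℂ → ℂ} {ρ τ σ : ℝ} (h : Good F G ρ τ) (hρ : 0 < ρ)
    (hστ : σ < τ) {W : Multiset ℂ} (hW : IsFac (Res F G ρ) 0 σ W) :
    {x : ℂ × ℂ | (x.1 ∈ ball (0 : ℂ) ρ ∧ x.2 ∈ ball (0 : ℂ) σ) ∧ F x = 0 ∧ G x = 0}.Finite := by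
  have : (⋃ c ∈ W.toFinset, (fun z => (z, c)) '' (((roots F ρ c).toFinset : Finset ℂ) : Set ℂ)).Finite := by
    refine Set.Finite.biUnion (Finset.finite_toSet _) fun c _ => (Finset.finite_toSet _).image _
  refine this.subset ?_
  rintro ⟨z, t⟩ ⟨⟨h1, h2⟩, h3, h4⟩
  have ht := ball_subset_ball hστ.le h2
  simp only [mem_iUnion]
  refine ⟨t, ?_, z, ?_, rfl⟩
  · rw [Multiset.mem_toFinset, hW.mem_iff, h.res_zero hρ ht]
    exact ⟨h2, z, h1, h3, h4⟩
  · rw [Finset.mem_coe, Multiset.mem_toFinset, (h.fac hρ ht).mem_iff]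
    exact ⟨h1, h3⟩

lemma Setup.degree {H K F G : ℂ × ℂ → ℂ} {ρ τ σ η : ℝ} (S : Setup H K ρ τ σ η)
    {W : Multiset ℂ} (hW : IsFac (Res H K ρ) 0 σ W)
    (hF : ∀ x : ℂ × ℂ, x.1 ∈ closedBall (0 : ℂ) ρ → x.2 ∈ closedBall (0 : ℂ) ρ → AnalyticAt ℂ F x)
    (hG : ∀ x : ℂ × ℂ, x.1 ∈ closedBall (0 : ℂ) ρ → x.2 ∈ closedBall (0 : ℂ) ρ → AnalyticAt ℂ G x)
    (hFH : ∀ x : ℂ × ℂ, x.1 ∈ closedBall (0 : ℂ) ρ → x.2 ∈ closedBall (0 : ℂ) ρ →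
      ‖F x - H x‖ < η / 2)
    (hGK : ∀ x : ℂ × ℂ, x.1 ∈ closedBall (0 : ℂ) ρ → x.2 ∈ closedBall (0 : ℂ) ρ →
      ‖G x - K x‖ < η / 2)
    (hreg : ∀ x : ℂ × ℂ, x.1 ∈ ball (0 : ℂ) ρ → x.2 ∈ ball (0 : ℂ) ρ → F x = 0 → G x = 0 →
      ∀ v, fderiv ℂ F x v = 0 → fderiv ℂ G x v = 0 → v = 0) :
    {x : ℂ × ℂ | (x.1 ∈ ball (0 : ℂ) ρ ∧ x.2 ∈ ball (0 : ℂ) ρ) ∧ F x = 0 ∧ G x = 0}.Finite ∧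
    {x : ℂ × ℂ | (x.1 ∈ ball (0 : ℂ) ρ ∧ x.2 ∈ ball (0 : ℂ) ρ) ∧ F x = 0 ∧ G x = 0}.ncard
      = W.card := by
  have hρ : 0 < ρ := S.hσ.trans (S.hστ.trans_le S.hτρ)
  have hη := S.hη
  have hσρ : ball (0 : ℂ) σ ⊆ ball 0 ρ := ball_subset_ball (S.hστ.le.trans S.hτρ)
  have hbc : ball (0 : ℂ) ρ ⊆ closedBall 0 ρ := ball_subset_closedBall
  obtain ⟨g1, ⟨W1, hW1⟩, -, hz1⟩ := S.pert hF hG (fun x h1 h2 => by linarith [hFH x h1 h2])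
    (fun x h1 h2 => by linarith [hGK x h1 h2])
  have hset : {x : ℂ × ℂ | (x.1 ∈ ball (0 : ℂ) ρ ∧ x.2 ∈ ball (0 : ℂ) ρ) ∧ F x = 0 ∧ G x = 0}
      = {x : ℂ × ℂ | (x.1 ∈ ball (0 : ℂ) ρ ∧ x.2 ∈ ball (0 : ℂ) σ) ∧ F x = 0 ∧ G x = 0} := by
    ext x
    constructor
    · rintro ⟨⟨h1, h2⟩, h3, h4⟩
      exact ⟨hz1 x (hbc h1) (hbc h2) h3 h4, h3, h4⟩
    · rintro ⟨⟨h1, h2⟩, h3, h4⟩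
      exact ⟨⟨h1, hσρ h2⟩, h3, h4⟩
  have hfin := g1.finite_zeros hρ S.hστ hW1
  rw [hset]
  refine ⟨hfin, ?_⟩
  -- bound on G
  obtain ⟨C, hC⟩ : ∃ C, ∀ x ∈ closedBall (0 : ℂ) ρ ×ˢ closedBall (0 : ℂ) ρ, ‖G x‖ ≤ C :=
    ((isCompact_closedBall (0 : ℂ) ρ).prod (isCompact_closedBall (0 : ℂ) ρ)).exists_bound_of_continuousOn
      (fun x hx => (hG x hx.1 hx.2).continuousAt.continuousWithinAt)
  have ev1 : ∀ᶠ s : ℂ in 𝓝[≠] 0, ‖s‖ * (|C| + 1) < η / 2 := by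
    apply nhdsWithin_le_nhds
    have : Tendsto (fun s : ℂ => ‖s‖ * (|C| + 1)) (𝓝 0) (𝓝 0) := by
      have : Continuous (fun s : ℂ => ‖s‖ * (|C| + 1)) := by fun_prop
      simpa using this.tendsto 0
    exact this.eventually (gt_mem_nhds (by linarith))
  have ev2 : ∀ᶠ s : ℂ in 𝓝[≠] 0, ∀ x ∈ {x : ℂ × ℂ | (x.1 ∈ ball (0 : ℂ) ρ ∧ x.2 ∈ ball (0 : ℂ) σ) ∧ F x = 0 ∧ G x = 0},
      fderiv ℂ F x (1, 0) + s * fderiv ℂ G x (1, 0) ≠ 0 := by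
    rw [Filter.eventually_all_finite hfin]
    rintro x ⟨⟨h1, h2⟩, h3, h4⟩
    by_cases hA : fderiv ℂ F x (1, 0) = 0
    · have hB : fderiv ℂ G x (1, 0) ≠ 0 := fun hB => by
        have := hreg x h1 (hσρ h2) h3 h4 (1, 0) hA hB
        simp at this
      filter_upwards [self_mem_nhdsWithin] with s hs
      rw [hA, zero_add]
      exact mul_ne_zero hs hB
    · apply nhdsWithin_le_nhds
      have : Continuous (fun s : ℂ => fderiv ℂ F x (1, 0) + s * fderiv ℂ G x (1, 0)) := by fun_prop
      exact this.continuousAt.eventually_ne (by simpa using hA)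
  obtain ⟨s, hs1, hs2⟩ := (ev1.and ev2).exists
  set F' : ℂ × ℂ → ℂ := fun x => F x + s * G x with hF'
  obtain ⟨g2, ⟨W2, hW2⟩, hc, hz2⟩ := S.pert (F := F') (G := G)
    (fun x h1 h2 => (hF x h1 h2).add (analyticAt_const.mul (hG x h1 h2))) hG
    (fun x h1 h2 => by
      have e : F' x - H x = (F x - H x) + s * G x := by simp only [hF']; ring
      rw [e]
      refine (norm_add_le _ _).trans_lt ?_
      rw [norm_mul]
      have := hC x ⟨h1, h2⟩
      have h3 : ‖s‖ * ‖G x‖ ≤ ‖s‖ * (|C| + 1) := by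
        gcongr
        linarith [le_abs_self C]
      linarith [hFH x h1 h2])
    (fun x h1 h2 => by linarith [hGK x h1 h2])
  rw [← hc W W2 hW hW2, ← g2.ncard_eq hρ S.hστ hW2]
  · congr 1
    ext x
    simp only [hF', Set.mem_ofPred_eq]
    constructor
    · rintro ⟨h, h3, h4⟩
      exact ⟨h, by simp [h3, h4], h4⟩
    · rintro ⟨h, h3, h4⟩
      exact ⟨h, by simpa [h4] using h3, h4⟩
  · intro x h1 h2 h3 h4
    have h3' : F x = 0 := by simpa [hF', h4] using h3
    have hd : ∀ v, fderiv ℂ F' x v = fderiv ℂ F x v + s * fderiv ℂ G x v := by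
      intro v
      have hdF := (hF x (hbc h1) (hbc (hσρ h2))).differentiableAt
      have hdG := (hG x (hbc h1) (hbc (hσρ h2))).differentiableAt
      have := hdF.hasFDerivAt.add (hdG.hasFDerivAt.const_mul s)
      rw [show fderiv ℂ F' x = _ from this.fderiv]
      simp
    refine ⟨?_, ?_⟩
    · rw [hd]
      exact hs2 x ⟨⟨h1, h2⟩, h3', h4⟩
    · intro v hv1 hv2
      rw [hd, hv2, mul_zero, add_zero] at hv1
      exact hreg x h1 (hσρ h2) h3' h4 v hv1 hv2

lemma exists_setup {H K : ℂ × ℂ → ℂ} {ρ : ℝ} (hρ : 0 < ρ)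
    (hH : ∀ x : ℂ × ℂ, x.1 ∈ closedBall (0 : ℂ) ρ → x.2 ∈ closedBall (0 : ℂ) ρ → AnalyticAt ℂ H x)
    (hK : ∀ x : ℂ × ℂ, x.1 ∈ closedBall (0 : ℂ) ρ → x.2 ∈ closedBall (0 : ℂ) ρ → AnalyticAt ℂ K x)
    (h0 : ∀ x : ℂ × ℂ, x.1 ∈ closedBall (0 : ℂ) ρ → x.2 ∈ closedBall (0 : ℂ) ρ →
      H x = 0 → K x = 0 → x = 0)
    (hs : ∀ z ∈ sphere (0 : ℂ) ρ, H (z, 0) ≠ 0) :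
    ∃ τ σ η, Setup H K ρ τ σ η := by
  have h0ρ : (0 : ℂ) ∈ closedBall (0 : ℂ) ρ := by simpa using hρ.le
  have ev : ∀ᶠ t : ℂ in 𝓝 0, ∀ z ∈ sphere (0 : ℂ) ρ, H (z, t) ≠ 0 := by
    apply (isCompact_sphere (0 : ℂ) ρ).eventually_forall_of_forall_eventually
    intro z hz
    have hc : ContinuousAt H (z, 0) := (hH (z, 0) (sphere_subset_closedBall hz) h0ρ).continuousAt
    have := hc.eventually_ne (hs z hz)
    have sw : Tendsto (fun p : ℂ × ℂ => (p.2, p.1)) (𝓝 ((0 : ℂ), z)) (𝓝 (z, 0)) :=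
      continuous_swap.tendsto _
    exact sw.eventually this
  obtain ⟨ε, hε, hε'⟩ := Metric.eventually_nhds_iff_ball.mp ev
  set τ := min (ε / 2) ρ with hτ
  have hτ0 : 0 < τ := by positivity
  have hτε : closedBall (0 : ℂ) τ ⊆ ball 0 ε := closedBall_subset_ball (by
    have := min_le_left (ε / 2) ρ; linarith)
  have hτρ : τ ≤ ρ := min_le_right _ _
  have hτρ' : closedBall (0 : ℂ) τ ⊆ closedBall 0 ρ := closedBall_subset_closedBall hτρ
  obtain ⟨η₁, hη₁, h1⟩ : ∃ η > 0, ∀ x ∈ sphere (0 : ℂ) ρ ×ˢ closedBall (0 : ℂ) τ, η ≤ ‖H x‖ := by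
    have hcp : IsCompact (sphere (0 : ℂ) ρ ×ˢ closedBall (0 : ℂ) τ) :=
      (isCompact_sphere _ _).prod (isCompact_closedBall _ _)
    refine hcp.exists_forall_le' (a := (0 : ℝ)) (f := fun x => ‖H x‖) ?_ ?_
    · intro x hx
      exact (hH x (sphere_subset_closedBall hx.1) (hτρ' hx.2)).continuousAt.norm.continuousWithinAt
    · intro x hx
      exact norm_pos_iff.mpr (hε' x.2 (hτε hx.2) x.1 hx.1)
  obtain ⟨η₂, hη₂, h2⟩ : ∃ η > 0, ∀ x ∈ (closedBall (0 : ℂ) ρ ×ˢ closedBall (0 : ℂ) ρ) \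
      (ball (0 : ℂ) ρ ×ˢ ball (0 : ℂ) (τ / 2)), η ≤ max ‖H x‖ ‖K x‖ := by
    have hcp : IsCompact ((closedBall (0 : ℂ) ρ ×ˢ closedBall (0 : ℂ) ρ) \
      (ball (0 : ℂ) ρ ×ˢ ball (0 : ℂ) (τ / 2))) :=
      ((isCompact_closedBall _ _).prod (isCompact_closedBall _ _)).diff (isOpen_ball.prod isOpen_ball)
    refine hcp.exists_forall_le' (a := (0 : ℝ)) (f := fun x => max ‖H x‖ ‖K x‖) ?_ ?_
    · intro x hx
      have : ContinuousAt (fun x => max ‖H x‖ ‖K x‖) x :=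
        (hH x hx.1.1 hx.1.2).continuousAt.norm.max (hK x hx.1.1 hx.1.2).continuousAt.norm
      exact this.continuousWithinAt
    · intro x hx
      by_contra hc
      have hm := not_lt.mp hc
      have e1 : H x = 0 := norm_le_zero_iff.mp ((le_max_left _ _).trans hm)
      have e2 : K x = 0 := norm_le_zero_iff.mp ((le_max_right _ _).trans hm)
      have := h0 x hx.1.1 hx.1.2 e1 e2
      apply hx.2
      rw [this]
      exact ⟨by simpa using hρ, by simpa using hτ0⟩
  refine ⟨τ, τ / 2, min η₁ η₂, by positivity, by linarith, hτρ, by positivity, hH, hK, ?_, ?_⟩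
  · intro z hz t ht
    exact (min_le_left _ _).trans (h1 (z, t) ⟨hz, ball_subset_closedBall ht⟩)
  · intro x hx1 hx2 hx3
    have := h2 x ⟨⟨hx1, hx2⟩, hx3⟩
    rcases le_max_iff.mp this with h | h
    · exact Or.inl ((min_le_right _ _).trans h)
    · exact Or.inr ((min_le_right _ _).trans h)

/-- the special form has degree `m` -/
lemma special_card {F G : ℂ × ℂ → ℂ} {ρ τ σ : ℝ} (h : Good F G ρ τ) (hρ : 0 < ρ) (hσ : 0 < σ)
    (hστ : σ < τ) (hτρ : τ ≤ ρ) {W : Multiset ℂ} (hW : IsFac (Res F G ρ) 0 σ W) {m : ℕ} (hm : 0 < m)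
    {A B C e D : ℝ} (hA : 0 < A) (hB : 0 < B) (he : e * C ≤ A * B / 2)
    (he0 : 0 ≤ e) 
    (α β γ v : ℂ × ℂ → ℂ)
    (hF : ∀ x : ℂ × ℂ, x.1 ∈ closedBall (0 : ℂ) ρ → x.2 ∈ closedBall (0 : ℂ) ρ →
      F x = x.1 ^ m * α x + x.2 * v x ∧ G x = x.2 * β x + x.1 ^ m * γ x ∧
      A ≤ ‖α x‖ ∧ ‖α x‖ ≤ D ∧ B ≤ ‖β x‖ ∧ ‖β x‖ ≤ D ∧ ‖γ x‖ ≤ e ∧ ‖v x‖ ≤ C) :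
    W.card = m := by
  have hbc : ball (0 : ℂ) ρ ⊆ closedBall 0 ρ := ball_subset_closedBall
  have key : ∀ z ∈ closedBall (0 : ℂ) ρ, ∀ t ∈ closedBall (0 : ℂ) ρ, F (z, t) = 0 →
      A * ‖z‖ ^ m ≤ C * ‖t‖ ∧ B / 2 * ‖t‖ ≤ ‖G (z, t)‖ ∧ ‖G (z, t)‖ ≤ (D + B / 2) * ‖t‖ := by
    intro z hz t ht h0
    obtain ⟨h1, h2, h3, h4, h5, h6, h7, h8⟩ := hF (z, t) hz ht
    rw [h0] at h1
    simp only at h1 h2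
    have e1 : ‖z‖ ^ m * ‖α (z, t)‖ = ‖t‖ * ‖v (z, t)‖ := by
      have : z ^ m * α (z, t) = - (t * v (z, t)) := by linear_combination -h1
      rw [← norm_pow, ← norm_mul, this, norm_neg, norm_mul]
    have hzp : 0 ≤ ‖z‖ ^ m := by positivity
    have i1 : A * ‖z‖ ^ m ≤ C * ‖t‖ := by
      calc A * ‖z‖ ^ m ≤ ‖α (z, t)‖ * ‖z‖ ^ m := by gcongr
        _ = ‖v (z, t)‖ * ‖t‖ := by linarith
        _ ≤ C * ‖t‖ := by gcongr
    have i2 : ‖z ^ m * γ (z, t)‖ ≤ B / 2 * ‖t‖ := by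
      rw [norm_mul, norm_pow]
      have j1 : ‖z‖ ^ m * ‖γ (z, t)‖ ≤ ‖z‖ ^ m * e := by gcongr
      have j2 : A * (‖z‖ ^ m * e) ≤ A * (B / 2 * ‖t‖) := by
        calc A * (‖z‖ ^ m * e) = (A * ‖z‖ ^ m) * e := by ring
          _ ≤ (C * ‖t‖) * e := by gcongr
          _ = (e * C) * ‖t‖ := by ring
          _ ≤ (A * B / 2) * ‖t‖ := by gcongr
          _ = _ := by ring
      have j3 := le_of_mul_le_mul_left j2 hA
      linarith
    have i3 : B * ‖t‖ ≤ ‖t * β (z, t)‖ := by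
      rw [norm_mul, mul_comm]; gcongr
    have i4 : ‖t * β (z, t)‖ ≤ D * ‖t‖ := by
      rw [norm_mul, mul_comm]; gcongr
    refine ⟨i1, ?_, ?_⟩
    · rw [h2]
      have := norm_sub_le_norm_add (t * β (z, t)) (z ^ m * γ (z, t))
      linarith
    · rw [h2]
      have := norm_add_le (t * β (z, t)) (z ^ m * γ (z, t))
      linarith
  have hσρ : σ ≤ ρ := hστ.le.trans hτρ
  have h0σ : (0 : ℂ) ∈ ball (0 : ℂ) σ := by simpa using hσ
  have h0τ : (0 : ℂ) ∈ ball (0 : ℂ) τ := by simpa using hσ.trans hστ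
  have h0ρ : (0 : ℂ) ∈ ball (0 : ℂ) ρ := by simpa using hρ
  -- roots at t = 0
  have hfac0 := h.fac hρ h0τ
  have hcard0 : (roots F ρ 0).card = m := by
    have hc : (roots F ρ 0).count 0 = m := by
      refine hfac0.count_eq h0ρ (A := A) (B := D) hA ?_
      apply nhdsWithin_le_nhds
      filter_upwards [isOpen_ball.mem_nhds h0ρ] with z hz
      obtain ⟨h1, h2, h3, h4, h5, h6, h7, h8⟩ := hF (z, 0) (hbc hz) (hbc h0ρ)
      rw [h1]
      simp only [zero_mul, add_zero, sub_zero, norm_mul, norm_pow]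
      constructor
      · rw [mul_comm]; gcongr
      · rw [mul_comm]; gcongr
    rw [← hc, eq_comm, Multiset.count_eq_card]
    intro z hz
    rw [hfac0.mem_iff] at hz
    have := (key z (hbc hz.1) 0 (hbc h0ρ) hz.2).1
    rw [norm_zero, mul_zero] at this
    have h2 : ‖z‖ ^ m ≤ 0 := by
      by_contra hcon
      have := mul_pos hA (not_le.mp hcon)
      linarith
    have h3 : ‖z‖ ^ m = 0 := le_antisymm h2 (by positivity)
    exact (norm_eq_zero.mp (pow_eq_zero_iff hm.ne' |>.mp h3)).symm
  have hW0 : W.count 0 = m := by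
    set M := max (2 / B) (D + B / 2) with hM
    have hMp : 0 < M := by positivity
    refine h.count_of_bounds hρ hστ hW h0σ univ m hMp ?_ ?_
    · filter_upwards [isOpen_ball.mem_nhds h0τ] with t ht
      simp only [mem_univ, Multiset.filter_true]
      rw [h.card_roots hρ ht h0τ, hcard0]
    · filter_upwards [isOpen_ball.mem_nhds h0τ] with t ht z hz h0
      refine ⟨fun _ => ?_, fun hx => absurd (mem_univ z) hx⟩
      obtain ⟨-, k1, k2⟩ := key z (hbc hz) t (hbc (ball_subset_ball hτρ ht)) h0
      rw [sub_zero]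
      constructor
      · refine le_trans ?_ k1
        gcongr
        rw [inv_le_comm₀ hMp (by positivity), inv_div]
        exact le_max_left _ _
      · refine k2.trans ?_
        gcongr
        exact le_max_right _ _
  rw [← hW0, eq_comm, Multiset.count_eq_card]
  intro t ht
  rw [hW.mem_iff] at ht
  obtain ⟨ht, hR⟩ := ht
  rw [h.res_zero hρ (ball_subset_ball hστ.le ht)] at hR
  obtain ⟨z, hz, h1, h2⟩ := hR
  have := (key z (hbc hz) t (hbc (ball_subset_ball hσρ ht)) h1).2.1
  rw [h2, norm_zero] at this
  have h3 : ‖t‖ ≤ 0 := by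
    by_contra hcon
    have := mul_pos (half_pos hB) (not_le.mp hcon)
    linarith
  exact (norm_le_zero_iff.mp h3).symm



lemma sard {f : Cn 2 → Cn 2} {r : ℝ} (hf : AnalyticOnNhd ℂ f (ball 0 r)) :
    ∀ ε > 0, ∃ q : Cn 2, ‖q‖ < ε ∧ IsRegularValueOn f (ball 0 r) q := by
  intro ε hε
  set s : Set (Cn 2) := {x ∈ ball 0 r | ¬ Function.Bijective (fderiv ℂ f x)} with hs
  have h0 : MeasureTheory.volume (f '' s) = 0 := by
    refine MeasureTheory.addHaar_image_eq_zero_of_det_fderivWithin_eq_zero MeasureTheory.volume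
      (f' := fun x => (fderiv ℂ f x).restrictScalars ℝ) ?_ ?_
    · intro x hx
      exact ((hf x hx.1).differentiableAt.hasFDerivAt.restrictScalars ℝ).hasFDerivWithinAt
    · intro x hx
      by_contra hdet
      apply hx.2
      have hu : IsUnit (LinearMap.det (((fderiv ℂ f x).restrictScalars ℝ : Cn 2 →L[ℝ] Cn 2) : Cn 2 →ₗ[ℝ] Cn 2)) :=
        isUnit_iff_ne_zero.mpr hdet
      have := (LinearMap.equivOfIsUnitDet hu).bijective
      have e : (LinearMap.equivOfIsUnitDet hu : Cn 2 → Cn 2) = fderiv ℂ f x := by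
        funext y; simp
      rwa [e] at this
  have hd := MeasureTheory.Measure.dense_of_ae (μ := (MeasureTheory.volume : MeasureTheory.Measure (Cn 2)))
    (p := fun x => x ∉ f '' s) (MeasureTheory.measure_eq_zero_iff_ae_notMem.mp h0)
  obtain ⟨q, hq1, hq2⟩ := hd.exists_mem_open isOpen_ball (⟨0, by simpa using hε⟩ : (ball (0 : Cn 2) ε).Nonempty)
  refine ⟨q, by simpa using hq2, fun x hx hfx => ?_⟩
  by_contra hb
  exact hq1 ⟨x, ⟨hx, hb⟩, hfx⟩

/-- local degree -/
def DegAt (h : Cn 2 → Cn 2) (ρ : ℝ) (N : ℕ) : Prop :=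
  ∃ δ > 0, ∀ f : Cn 2 → Cn 2, AnalyticOnNhd ℂ f (closedBall 0 ρ) →
    (∀ x ∈ closedBall (0 : Cn 2) ρ, ‖f x - h x‖ < δ) →
    IsRegularValueOn f (ball 0 ρ) 0 →
    {x ∈ ball (0 : Cn 2) ρ | f x = 0}.Finite ∧ {x ∈ ball (0 : Cn 2) ρ | f x = 0}.ncard = N

/-- coordinates -/
def cc : (ℂ × ℂ) ≃L[ℂ] Cn 2 := (ContinuousLinearEquiv.finTwoArrow ℂ ℂ).symm

lemma cc_apply (x : ℂ × ℂ) : cc x = ![x.1, x.2] := rfl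
lemma cc_0 (x : ℂ × ℂ) : cc x 0 = x.1 := rfl
lemma cc_1 (x : ℂ × ℂ) : cc x 1 = x.2 := rfl

lemma cc_ball {x : ℂ × ℂ} {r : ℝ} (hr : 0 < r) :
    cc x ∈ ball (0 : Cn 2) r ↔ x.1 ∈ ball (0 : ℂ) r ∧ x.2 ∈ ball (0 : ℂ) r := by
  simp [mem_ball_zero_iff, pi_norm_lt_iff hr, cc_0, cc_1]

lemma cc_closedBall {x : ℂ × ℂ} {r : ℝ} (hr : 0 ≤ r) :
    cc x ∈ closedBall (0 : Cn 2) r ↔ x.1 ∈ closedBall (0 : ℂ) r ∧ x.2 ∈ closedBall (0 : ℂ) r := by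
  simp [mem_closedBall_zero_iff, pi_norm_le_iff_of_nonneg hr, cc_0, cc_1]

lemma an_comp {f : Cn 2 → Cn 2} {x : ℂ × ℂ} (i : Fin 2) (h : AnalyticAt ℂ f (cc x)) :
    AnalyticAt ℂ (fun x => f (cc x) i) x := by
  have h1 : AnalyticAt ℂ (fun x => f (cc x)) x := h.comp (f := cc) (cc.toContinuousLinearMap.analyticAt x)
  exact analyticAt_pi_iff.mp h1 i

lemma fd_comp {f : Cn 2 → Cn 2} {x : ℂ × ℂ} (i : Fin 2) (h : AnalyticAt ℂ f (cc x)) (v : ℂ × ℂ) :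
    fderiv ℂ (fun x => f (cc x) i) x v = fderiv ℂ f (cc x) (cc v) i := by
  have h1 := h.differentiableAt.hasFDerivAt.comp x cc.hasFDerivAt
  have h2 := hasFDerivAt_pi'.mp h1 i
  rw [show fderiv ℂ (fun x => f (cc x) i) x = _ from h2.fderiv]
  rfl

lemma degAt_of_setup {h : Cn 2 → Cn 2} {i j : Fin 2} (hij : ∀ k, k = i ∨ k = j)
    {ρ τ σ η : ℝ} (S : Setup (fun x => h (cc x) i) (fun x => h (cc x) j) ρ τ σ η)
    {W : Multiset ℂ} (hW : IsFac (Res (fun x => h (cc x) i) (fun x => h (cc x) j) ρ) 0 σ W) :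
    DegAt h ρ W.card := by
  have hρ : 0 < ρ := S.hσ.trans (S.hστ.trans_le S.hτρ)
  have hη := S.hη
  refine ⟨η / 2, by positivity, fun f hf hfh hreg => ?_⟩
  have hzero : ∀ y : Cn 2, y = 0 ↔ y i = 0 ∧ y j = 0 := by
    intro y
    constructor
    · rintro rfl; simp
    · rintro ⟨h1, h2⟩
      ext k
      rcases hij k with rfl | rfl <;> assumption
  have hd := S.degree hW (F := fun x => f (cc x) i) (G := fun x => f (cc x) j)
    (fun x h1 h2 => an_comp i (hf _ ((cc_closedBall hρ.le).mpr ⟨h1, h2⟩)))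
    (fun x h1 h2 => an_comp j (hf _ ((cc_closedBall hρ.le).mpr ⟨h1, h2⟩)))
    (fun x h1 h2 => by
      have := hfh _ ((cc_closedBall hρ.le).mpr ⟨h1, h2⟩)
      exact (norm_le_pi_norm (f (cc x) - h (cc x)) i).trans_lt this)
    (fun x h1 h2 => by
      have := hfh _ ((cc_closedBall hρ.le).mpr ⟨h1, h2⟩)
      exact (norm_le_pi_norm (f (cc x) - h (cc x)) j).trans_lt this)
    (fun x h1 h2 h3 h4 v hv1 hv2 => by
      have hx := (cc_ball hρ).mpr ⟨h1, h2⟩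
      have han := hf _ (ball_subset_closedBall hx)
      rw [fd_comp i han] at hv1
      rw [fd_comp j han] at hv2
      have hb := hreg _ hx ((hzero _).mpr ⟨h3, h4⟩)
      have : fderiv ℂ f (cc x) (cc v) = 0 := (hzero _).mpr ⟨hv1, hv2⟩
      have h5 := hb.1 (this.trans (map_zero _).symm)
      simpa using h5)
  have hset : {x ∈ ball (0 : Cn 2) ρ | f x = 0} = cc '' {x : ℂ × ℂ | (x.1 ∈ ball (0 : ℂ) ρ ∧ x.2 ∈ ball (0 : ℂ) ρ) ∧ f (cc x) i = 0 ∧ f (cc x) j = 0} := by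
    ext y
    obtain ⟨x, rfl⟩ := cc.surjective y
    rw [cc.injective.mem_set_image]
    constructor
    · rintro ⟨h1, h2⟩
      exact ⟨(cc_ball hρ).mp h1, (hzero _).mp h2⟩
    · rintro ⟨h1, h2⟩
      exact ⟨(cc_ball hρ).mpr h1, (hzero _).mpr h2⟩
  rw [hset]
  refine ⟨hd.1.image _, ?_⟩
  rw [Set.ncard_image_of_injective _ cc.injective]
  exact hd.2

/-- smallness data for a radius -/
def NiceAt (h : Cn 2 → Cn 2) (ρ : ℝ) : Prop :=
  AnalyticOnNhd ℂ h (closedBall 0 ρ) ∧ ∀ x ∈ closedBall (0 : Cn 2) ρ, h x = 0 → x = 0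

lemma ev_radius {p : Cn 2 → Prop} (hp : ∀ᶠ x in 𝓝 (0 : Cn 2), p x) :
    ∀ᶠ ρ in 𝓝[>] (0 : ℝ), ∀ x ∈ closedBall (0 : Cn 2) ρ, p x := by
  obtain ⟨ε, hε, h⟩ := Metric.eventually_nhds_iff_ball.mp hp
  filter_upwards [Ioo_mem_nhdsGT hε] with ρ hρ x hx
  exact h x (closedBall_subset_ball hρ.2 hx)

lemma ev_nice {h : Cn 2 → Cn 2} (ha : AnalyticAt ℂ h 0) (hi : IsolatedZeroAt0 h) :
    ∀ᶠ ρ in 𝓝[>] (0 : ℝ), NiceAt h ρ := by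
  have h2 := eventually_nhdsWithin_iff.mp hi.2
  filter_upwards [ev_radius ha.eventually_analyticAt, ev_radius h2] with ρ h3 h4
  refine ⟨fun x hx => h3 x hx, fun x hx h0 => ?_⟩
  by_contra hne
  exact h4 x hx hne h0

lemma setup_of {h : Cn 2 → Cn 2} {ρ : ℝ} (hρ : 0 < ρ) (hn : NiceAt h ρ)
    {i j : Fin 2} (hij : ∀ k, k = i ∨ k = j)
    (hs : ∀ z ∈ sphere (0 : ℂ) ρ, h (cc (z, 0)) i ≠ 0) :
    ∃ τ σ η, Setup (fun x => h (cc x) i) (fun x => h (cc x) j) ρ τ σ η := by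
  refine exists_setup hρ
    (fun x h1 h2 => an_comp i (hn.1 _ ((cc_closedBall hρ.le).mpr ⟨h1, h2⟩)))
    (fun x h1 h2 => an_comp j (hn.1 _ ((cc_closedBall hρ.le).mpr ⟨h1, h2⟩)))
    (fun x h1 h2 h3 h4 => ?_) hs
  have : h (cc x) = 0 := by
    ext k
    rcases hij k with rfl | rfl <;> assumption
  have := hn.2 _ ((cc_closedBall hρ.le).mpr ⟨h1, h2⟩) this
  simpa using this

lemma ev_degAt {h : Cn 2 → Cn 2} (ha : AnalyticAt ℂ h 0) (hi : IsolatedZeroAt0 h) :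
    ∀ᶠ ρ in 𝓝[>] (0 : ℝ), ∃ N, DegAt h ρ N := by
  obtain ⟨i, j, hij, hne⟩ : ∃ i j : Fin 2, (∀ k, k = i ∨ k = j) ∧
      ∀ᶠ z : ℂ in 𝓝[≠] 0, h (cc (z, 0)) i ≠ 0 := by
    have han : ∀ i, AnalyticAt ℂ (fun z : ℂ => h (cc (z, 0)) i) 0 := by
      intro i
      exact an_slice (F := fun x => h (cc x) i) (z := 0) (t := 0)
        (an_comp i (by simpa [show ((0 : ℂ), (0 : ℂ)) = 0 from rfl] using ha))
    rcases (han 0).eventually_eq_zero_or_eventually_ne_zero with h0 | h0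
    · rcases (han 1).eventually_eq_zero_or_eventually_ne_zero with h1 | h1
      · exfalso
        have hc : Continuous (fun z : ℂ => cc (z, 0)) := by fun_prop
        have h2 := eventually_nhdsWithin_iff.mp hi.2
        have h3 : ∀ᶠ z : ℂ in 𝓝 0, cc (z, 0) ∈ ({0}ᶜ : Set (Cn 2)) → h (cc (z, 0)) ≠ 0 := by
          have := hc.tendsto 0
          rw [show cc ((0 : ℂ), (0 : ℂ)) = 0 from map_zero cc] at this
          exact this.eventually h2
        have h4 : ∀ᶠ z : ℂ in 𝓝[≠] 0, False := by
          filter_upwards [nhdsWithin_le_nhds (h0.and (h1.and h3)), self_mem_nhdsWithin] with z hz hz0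
          apply hz.2.2
          · intro hcz
            have : cc (z, 0) 0 = 0 := by rw [show cc (z, 0) = 0 from hcz]; rfl
            exact hz0 this
          · ext k
            fin_cases k
            · exact hz.1
            · exact hz.2.1
        exact h4.exists.elim fun _ h => h
      · exact ⟨1, 0, by decide, h1⟩
    · exact ⟨0, 1, by decide, h0⟩
  obtain ⟨ε, hε, hz⟩ := Metric.eventually_nhds_iff_ball.mp (eventually_nhdsWithin_iff.mp hne)
  filter_upwards [ev_nice ha hi, Ioo_mem_nhdsGT hε] with ρ hn hρ
  obtain ⟨τ, σ, η, S⟩ := setup_of hρ.1 hn hij (fun z hz' => hz z (by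
    simp at hz' ⊢; linarith [hρ.2]) (by
      rintro rfl
      simp at hz'; linarith [hρ.1]))
  obtain ⟨W, hW⟩ := S.self.2
  exact ⟨_, degAt_of_setup hij S hW⟩

/-- the normal form -/
structure Form (m : ℕ) (a b : ℂ) (g : Cn 2 → Cn 2) (u₁ u₂ u₃ v : Cn 2 → ℂ) : Prop where
  hu₁ : AnalyticAt ℂ u₁ 0
  hu₁0 : u₁ 0 = 0
  hu₂ : AnalyticAt ℂ u₂ 0
  hu₂0 : u₂ 0 = 0
  hu₃ : AnalyticAt ℂ u₃ 0
  hu₃0 : u₃ 0 = 0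
  hv : AnalyticAt ℂ v 0
  hform : ∀ᶠ x in 𝓝 (0 : Cn 2),
      g x = ![x 0 ^ m * (a + u₁ x) + x 1 * v x,
              x 1 * (b + u₂ x) + x 0 ^ m * u₃ x]

lemma Form.analytic {m : ℕ} {a b : ℂ} {g : Cn 2 → Cn 2} {u₁ u₂ u₃ v : Cn 2 → ℂ}
    (h : Form m a b g u₁ u₂ u₃ v) : AnalyticAt ℂ g 0 := by
  have hx : ∀ i : Fin 2, AnalyticAt ℂ (fun x : Cn 2 => x i) 0 := fun i =>
    (ContinuousLinearMap.proj (R := ℂ) (φ := fun _ : Fin 2 => ℂ) i).analyticAt 0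
  have : AnalyticAt ℂ (fun x : Cn 2 => (![x 0 ^ m * (a + u₁ x) + x 1 * v x,
              x 1 * (b + u₂ x) + x 0 ^ m * u₃ x] : Cn 2)) 0 := by
    rw [analyticAt_pi_iff]
    intro i
    fin_cases i
    · exact (((hx 0).pow m).mul (analyticAt_const.add h.hu₁)).add ((hx 1).mul h.hv)
    · exact ((hx 1).mul (analyticAt_const.add h.hu₂)).add (((hx 0).pow m).mul h.hu₃)
  exact this.congr (h.hform.mono fun x hx => hx.symm)

lemma Form.ev_bounds {m : ℕ} {a b : ℂ} {g : Cn 2 → Cn 2} {u₁ u₂ u₃ v : Cn 2 → ℂ}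
    (h : Form m a b g u₁ u₂ u₃ v) (ha : a ≠ 0) (hb : b ≠ 0) :
    ∃ A B C e D : ℝ, 0 < A ∧ 0 < B ∧ e * C ≤ A * B / 2 ∧ 0 ≤ e ∧
    ∀ᶠ x in 𝓝 (0 : Cn 2), g x 0 = x 0 ^ m * (a + u₁ x) + x 1 * v x ∧
      g x 1 = x 1 * (b + u₂ x) + x 0 ^ m * u₃ x ∧
      A ≤ ‖a + u₁ x‖ ∧ ‖a + u₁ x‖ ≤ D ∧ B ≤ ‖b + u₂ x‖ ∧ ‖b + u₂ x‖ ≤ D ∧ ‖u₃ x‖ ≤ e ∧ ‖v x‖ ≤ C := by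
  have pa := norm_pos_iff.mpr ha
  have pb := norm_pos_iff.mpr hb
  have hC : 0 < ‖v 0‖ + 1 := by positivity
  have he : 0 < (‖a‖ / 2) * (‖b‖ / 2) / 2 / (‖v 0‖ + 1) := by positivity
  refine ⟨‖a‖ / 2, ‖b‖ / 2, ‖v 0‖ + 1, (‖a‖ / 2) * (‖b‖ / 2) / 2 / (‖v 0‖ + 1), ‖a‖ + ‖b‖ + 1,
    by positivity, by positivity, by rw [div_mul_cancel₀ _ hC.ne'], he.le, ?_⟩
  have c1 : Tendsto (fun x => ‖a + u₁ x‖) (𝓝 0) (𝓝 ‖a‖) := by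
    have := (continuousAt_const (y := a)).add h.hu₁.continuousAt |>.norm
    simpa [ContinuousAt, h.hu₁0] using this
  have c2 : Tendsto (fun x => ‖b + u₂ x‖) (𝓝 0) (𝓝 ‖b‖) := by
    have := (continuousAt_const (y := b)).add h.hu₂.continuousAt |>.norm
    simpa [ContinuousAt, h.hu₂0] using this
  have c3 : Tendsto (fun x => ‖u₃ x‖) (𝓝 0) (𝓝 0) := by
    have := h.hu₃.continuousAt.norm
    simpa [ContinuousAt, h.hu₃0] using this
  have c4 : Tendsto (fun x => ‖v x‖) (𝓝 0) (𝓝 ‖v 0‖) := h.hv.continuousAt.norm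
  filter_upwards [h.hform, c1.eventually (lt_mem_nhds (half_lt_self pa)),
    c1.eventually (gt_mem_nhds (show ‖a‖ < ‖a‖ + ‖b‖ + 1 by linarith)),
    c2.eventually (lt_mem_nhds (half_lt_self pb)),
    c2.eventually (gt_mem_nhds (show ‖b‖ < ‖a‖ + ‖b‖ + 1 by linarith)),
    c3.eventually (gt_mem_nhds he), c4.eventually (gt_mem_nhds (lt_add_one _))]
    with x h1 h2 h3 h4 h5 h6 h7
  refine ⟨by rw [h1]; rfl, by rw [h1]; rfl, h2.le, h3.le, h4.le, h5.le, h6.le, h7.le⟩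

lemma Form.zero {m : ℕ} {a b : ℂ} {g : Cn 2 → Cn 2} {u₁ u₂ u₃ v : Cn 2 → ℂ}
    (h : Form m a b g u₁ u₂ u₃ v) (hm : 0 < m) : g 0 = 0 := by
  rw [h.hform.self_of_nhds]
  ext k
  fin_cases k <;> simp [hm.ne']

lemma Form.isolated {m : ℕ} {a b : ℂ} {g : Cn 2 → Cn 2} {u₁ u₂ u₃ v : Cn 2 → ℂ}
    (h : Form m a b g u₁ u₂ u₃ v) (hm : 0 < m) (ha : a ≠ 0) (hb : b ≠ 0) : IsolatedZeroAt0 g := by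
  obtain ⟨A, B, C, e, D, hA, hB, he, he0, hev⟩ := h.ev_bounds ha hb
  refine ⟨h.zero hm, ?_⟩
  filter_upwards [nhdsWithin_le_nhds hev, self_mem_nhdsWithin] with x hx hne h0
  obtain ⟨h1, h2, h3, h4, h5, h6, h7, h8⟩ := hx
  apply hne
  rw [h0] at h1 h2
  simp only [Pi.zero_apply] at h1 h2
  have e1 : ‖x 0‖ ^ m * ‖a + u₁ x‖ = ‖x 1‖ * ‖v x‖ := by
    have : x 0 ^ m * (a + u₁ x) = - (x 1 * v x) := by linear_combination -h1
    rw [← norm_pow, ← norm_mul, this, norm_neg, norm_mul]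
  have e2 : ‖x 1‖ * ‖b + u₂ x‖ = ‖x 0‖ ^ m * ‖u₃ x‖ := by
    have : x 1 * (b + u₂ x) = - (x 0 ^ m * u₃ x) := by linear_combination -h2
    rw [← norm_pow, ← norm_mul, this, norm_neg, norm_mul]
  have p0 : 0 ≤ ‖x 0‖ ^ m := by positivity
  have p1 := norm_nonneg (x 1)
  have i1 : ‖x 0‖ ^ m * A ≤ ‖x 1‖ * C := by
    calc ‖x 0‖ ^ m * A ≤ ‖x 0‖ ^ m * ‖a + u₁ x‖ := by gcongr
      _ = _ := e1
      _ ≤ _ := by gcongr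
  have i2 : ‖x 1‖ * B ≤ ‖x 0‖ ^ m * e := by
    calc ‖x 1‖ * B ≤ ‖x 1‖ * ‖b + u₂ x‖ := by gcongr
      _ = _ := e2
      _ ≤ _ := by gcongr
  have i3 : ‖x 1‖ * (A * B) ≤ ‖x 1‖ * (A * B / 2) := by
    calc ‖x 1‖ * (A * B) = (‖x 1‖ * B) * A := by ring
      _ ≤ (‖x 0‖ ^ m * e) * A := by gcongr
      _ = (‖x 0‖ ^ m * A) * e := by ring
      _ ≤ (‖x 1‖ * C) * e := by gcongr
      _ = ‖x 1‖ * (e * C) := by ring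
      _ ≤ _ := by gcongr
  have hx1 : ‖x 1‖ = 0 := by
    have : 0 < A * B := by positivity
    nlinarith
  have hx0 : ‖x 0‖ ^ m = 0 := by
    rw [hx1, zero_mul] at i1
    nlinarith
  have hx0' : x 0 = 0 := norm_eq_zero.mp ((pow_eq_zero_iff hm.ne').mp hx0)
  ext k
  fin_cases k
  · exact hx0'
  · exact norm_eq_zero.mp hx1

lemma Form.degAt {m : ℕ} {a b : ℂ} {g : Cn 2 → Cn 2} {u₁ u₂ u₃ v : Cn 2 → ℂ}
    (h : Form m a b g u₁ u₂ u₃ v) (hm : 0 < m) (ha : a ≠ 0) (hb : b ≠ 0) :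
    ∀ᶠ ρ in 𝓝[>] (0 : ℝ), DegAt g ρ m := by
  obtain ⟨A, B, C, e, D, hA, hB, he, he0, hev⟩ := h.ev_bounds ha hb
  filter_upwards [ev_nice h.analytic (h.isolated hm ha hb), ev_radius hev, self_mem_nhdsWithin]
    with ρ hn hr hρ
  have hρ : 0 < ρ := hρ
  have hij : ∀ k : Fin 2, k = 0 ∨ k = 1 := by decide
  obtain ⟨τ, σ, η, S⟩ := setup_of hρ hn hij (fun z hz h0 => by
    obtain ⟨h1, -, h3, -⟩ := hr (cc (z, 0)) ((cc_closedBall hρ.le).mpr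
      ⟨sphere_subset_closedBall hz, by simpa using hρ.le⟩)
    rw [h0, cc_0, cc_1] at h1
    simp only [zero_mul, add_zero] at h1
    have hz0 : z ≠ 0 := by rintro rfl; simp at hz; linarith
    rcases mul_eq_zero.mp h1.symm with h5 | h5
    · exact pow_ne_zero m hz0 h5
    · rw [h5, norm_zero] at h3; linarith)
  obtain ⟨hg, W, hW⟩ := S.self
  have := special_card hg hρ S.hσ S.hστ S.hτρ hW hm hA hB he he0
    (fun x => a + u₁ (cc x)) (fun x => b + u₂ (cc x)) (fun x => u₃ (cc x)) (fun x => v (cc x))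
    (fun x h1 h2 => hr (cc x) ((cc_closedBall hρ.le).mpr ⟨h1, h2⟩))
  rw [← this]
  exact degAt_of_setup hij S hW

lemma DegAt.sub {h : Cn 2 → Cn 2} {ρ : ℝ} {N : ℕ} (hd : DegAt h ρ N) :
    ∃ δ > 0, ∀ f : Cn 2 → Cn 2, AnalyticOnNhd ℂ f (closedBall 0 ρ) →
    (∀ x ∈ closedBall (0 : Cn 2) ρ, ‖f x - h x‖ < δ) → ∀ q : Cn 2, ‖q‖ < δ →
    IsRegularValueOn f (ball 0 ρ) q →
    {x ∈ ball (0 : Cn 2) ρ | f x = q}.Finite ∧ {x ∈ ball (0 : Cn 2) ρ | f x = q}.ncard = N := by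
  obtain ⟨δ, hδ, H⟩ := hd
  refine ⟨δ / 2, by positivity, fun f hf hfh q hq hreg => ?_⟩
  have := H (fun x => f x - q) (fun x hx => (hf x hx).sub analyticAt_const) (fun x hx => by
    have e : f x - q - h x = (f x - h x) - q := by abel
    rw [e]
    have := norm_sub_le (f x - h x) q
    linarith [hfh x hx]) (fun x hx h0 => by
      rw [fderiv_sub_const]
      exact hreg x hx (sub_eq_zero.mp h0))
  simpa only [sub_eq_zero] using this

lemma DegAt.hasZeroOrder {h : Cn 2 → Cn 2} {ρ : ℝ} {N : ℕ} (hd : DegAt h ρ N) (hρ : 0 < ρ)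
    (hn : NiceAt h ρ) (h0 : h 0 = 0) : HasZeroOrder h 0 N := by
  refine ⟨ρ, hρ, hn.1, h0, hn.2, sard (hn.1.mono ball_subset_closedBall), ?_⟩
  obtain ⟨δ, hδ, H⟩ := hd.sub
  exact ⟨δ, hδ, fun q hq hreg => (H h hn.1 (fun x _ => by simpa using hδ) q hq hreg).2⟩

lemma Form.pert {m : ℕ} {a b : ℂ} {g : Cn 2 → Cn 2} {u₁ u₂ u₃ v : Cn 2 → ℂ}
    (h : Form m a b g u₁ u₂ u₃ v) (s : ℂ) :
    Form m (a + s) (b + s) (fun x => g x + s • ![x 0 ^ m, x 1]) u₁ u₂ u₃ v := by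
  refine ⟨h.hu₁, h.hu₁0, h.hu₂, h.hu₂0, h.hu₃, h.hu₃0, h.hv, ?_⟩
  filter_upwards [h.hform] with x hx
  rw [hx]
  ext k
  fin_cases k
  · simp; ring
  · simp; ring

lemma Form.le_deg {m : ℕ} {a b : ℂ} {g : Cn 2 → Cn 2} {u₁ u₂ u₃ v : Cn 2 → ℂ}
    (h : Form m a b g u₁ u₂ u₃ v) (hm : 0 < m) {ρ : ℝ} (hρ : 0 < ρ) (hρ1 : ρ ≤ 1)
    (hn : NiceAt g ρ) {N : ℕ} (hd : DegAt g ρ N) : m ≤ N := by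
  obtain ⟨δ, hδ, H⟩ := hd.sub
  obtain ⟨s, hs1, hs2, hs3⟩ : ∃ s : ℂ, ‖s‖ < δ ∧ a + s ≠ 0 ∧ b + s ≠ 0 := by
    have e1 : ∀ᶠ s : ℂ in 𝓝[≠] 0, ‖s‖ < δ := by
      apply nhdsWithin_le_nhds
      filter_upwards [ball_mem_nhds (0 : ℂ) hδ] with s hs
      simpa using hs
    have e2 : ∀ c : ℂ, ∀ᶠ s : ℂ in 𝓝[≠] 0, c + s ≠ 0 := by
      intro c
      by_cases hc : c = 0
      · filter_upwards [self_mem_nhdsWithin] with s hs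
        simpa [hc] using hs
      · apply nhdsWithin_le_nhds
        have : Continuous (fun s : ℂ => c + s) := by fun_prop
        exact this.continuousAt.eventually_ne (by simpa using hc)
    exact (e1.and ((e2 a).and (e2 b))).exists
  set f : Cn 2 → Cn 2 := fun x => g x + s • ![x 0 ^ m, x 1] with hf
  have hF := h.pert s
  obtain ⟨ρ', hD', hρ'⟩ := ((hF.degAt hm hs2 hs3).and (Ioo_mem_nhdsGT hρ)).exists
  obtain ⟨δ', hδ', H'⟩ := hD'.sub
  have hfa : AnalyticOnNhd ℂ f (closedBall 0 ρ) := by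
    intro x hx
    have hp : ∀ i : Fin 2, AnalyticAt ℂ (fun x : Cn 2 => x i) x := fun i =>
      (ContinuousLinearMap.proj (R := ℂ) (φ := fun _ : Fin 2 => ℂ) i).analyticAt x
    have : AnalyticAt ℂ (fun x : Cn 2 => (![x 0 ^ m, x 1] : Cn 2)) x := by
      rw [analyticAt_pi_iff]
      intro i
      fin_cases i
      · exact (hp 0).pow m
      · exact hp 1
    have h2 : AnalyticAt ℂ (fun x : Cn 2 => s • (![x 0 ^ m, x 1] : Cn 2)) x := by
      have h3 := AnalyticAt.const_smul (c := s) this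
      exact h3
    exact (hn.1 x hx).add h2
  obtain ⟨q, hq, hreg⟩ := sard (hfa.mono ball_subset_closedBall) (min δ δ') (by positivity)
  have r1 := H f hfa (fun x hx => by
    simp only [hf, add_sub_cancel_left]
    rw [norm_smul]
    have hx' : ∀ i, ‖x i‖ ≤ 1 := fun i => (norm_le_pi_norm x i).trans
      ((mem_closedBall_zero_iff.mp hx).trans hρ1)
    have : ‖(![x 0 ^ m, x 1] : Cn 2)‖ ≤ 1 := by
      rw [pi_norm_le_iff_of_nonneg zero_le_one]
      intro i
      fin_cases i
      · simpa using pow_le_one₀ (norm_nonneg _) (hx' 0)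
      · simpa using hx' 1
    have : ‖s‖ * ‖(![x 0 ^ m, x 1] : Cn 2)‖ ≤ ‖s‖ * 1 := by gcongr
    linarith) q (hq.trans_le (min_le_left _ _)) hreg
  have hsub : ball (0 : Cn 2) ρ' ⊆ ball 0 ρ := ball_subset_ball hρ'.2.le
  have r2 := H' f (hfa.mono (closedBall_subset_closedBall hρ'.2.le))
    (fun x _ => by simpa [hf] using hδ') q (hq.trans_le (min_le_right _ _))
    (fun x hx => hreg x (hsub hx))
  rw [← r1.2, ← r2.2]
  exact Set.ncard_le_ncard (fun x hx => ⟨hsub hx.1, hx.2⟩) r1.1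

lemma Form.le_of_hasZeroOrder {m : ℕ} {a b : ℂ} {g : Cn 2 → Cn 2} {u₁ u₂ u₃ v : Cn 2 → ℂ}
    (h : Form m a b g u₁ u₂ u₃ v) (hm : 0 < m) (hi : IsolatedZeroAt0 g) {N : ℕ}
    (hN : HasZeroOrder g 0 N) : m ≤ N := by
  obtain ⟨r, hr, hga, -, hz, hex, δ, hδ, H⟩ := hN
  obtain ⟨ρ, ⟨hn, N', hd⟩, hρ⟩ := ((ev_nice h.analytic hi).and (ev_degAt h.analytic hi)
    |>.and (Ioo_mem_nhdsGT (lt_min hr one_pos))).exists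
  have hmN := h.le_deg hm hρ.1 (hρ.2.le.trans (min_le_right _ _)) hn hd
  have hρr : ρ < r := hρ.2.trans_le (min_le_left _ _)
  obtain ⟨δ', hδ', H'⟩ := hd.sub
  obtain ⟨c, hc, hc'⟩ : ∃ c > 0, ∀ x ∈ closedBall (0 : Cn 2) r \ ball 0 ρ, c ≤ ‖g x‖ := by
    refine ((isCompact_closedBall (0 : Cn 2) r).diff isOpen_ball).exists_forall_le' (a := (0 : ℝ))
      (f := fun x => ‖g x‖) ?_ ?_
    · intro x hx
      exact (hga x hx.1).continuousAt.norm.continuousWithinAt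
    · intro x hx
      refine norm_pos_iff.mpr fun h0 => hx.2 ?_
      rw [hz x hx.1 h0]
      simpa using hρ.1
  obtain ⟨q, hq, hreg⟩ := hex (min δ (min δ' c)) (by positivity)
  have hq1 := hq.trans_le (min_le_left _ _)
  have hq2 := hq.trans_le ((min_le_right _ _).trans (min_le_left _ _))
  have hq3 := hq.trans_le ((min_le_right _ _).trans (min_le_right _ _))
  have hsub : ball (0 : Cn 2) ρ ⊆ ball 0 r := ball_subset_ball hρr.le
  have r1 := H q hq1 hreg
  have r2 := (H' g hn.1 (fun x _ => by simpa using hδ') q hq2 (fun x hx => hreg x (hsub hx))).2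
  have hset : {x ∈ ball (0 : Cn 2) r | g x = q} = {x ∈ ball (0 : Cn 2) ρ | g x = q} := by
    ext x
    constructor
    · rintro ⟨h1, h2⟩
      refine ⟨?_, h2⟩
      by_contra hx
      have := hc' x ⟨ball_subset_closedBall h1, hx⟩
      rw [h2] at this
      linarith
    · rintro ⟨h1, h2⟩
      exact ⟨hsub h1, h2⟩
  rw [← r1, hset, r2]
  exact hmN

theorem zeroOrder_corollary_two (m : ℕ) (hm : 0 < m) (a b : ℂ) (g : Cn 2 → Cn 2)
    (u₁ u₂ u₃ v : Cn 2 → ℂ)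
    (hu₁ : AnalyticAt ℂ u₁ 0) (hu₁0 : u₁ 0 = 0)
    (hu₂ : AnalyticAt ℂ u₂ 0) (hu₂0 : u₂ 0 = 0)
    (hu₃ : AnalyticAt ℂ u₃ 0) (hu₃0 : u₃ 0 = 0)
    (hv : AnalyticAt ℂ v 0)
    (hform : ∀ᶠ x in 𝓝 (0 : Cn 2),
      g x = ![x 0 ^ m * (a + u₁ x) + x 1 * v x,
              x 1 * (b + u₂ x) + x 0 ^ m * u₃ x]) :
    (IsolatedZeroAt0 g → m ≤ zeroOrder g 0) ∧
    (a ≠ 0 → b ≠ 0 → IsolatedZeroAt0 g ∧ zeroOrder g 0 = m) := by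
  have h : Form m a b g u₁ u₂ u₃ v := ⟨hu₁, hu₁0, hu₂, hu₂0, hu₃, hu₃0, hv, hform⟩
  have part1 : IsolatedZeroAt0 g → m ≤ zeroOrder g 0 := by
    intro hi
    obtain ⟨ρ, ⟨hn, N, hd⟩, hρ⟩ := ((ev_nice h.analytic hi).and (ev_degAt h.analytic hi)
      |>.and self_mem_nhdsWithin).exists
    have hN : HasZeroOrder g 0 N := hd.hasZeroOrder hρ hn hi.1
    exact le_csInf ⟨N, hN⟩ fun k hk => h.le_of_hasZeroOrder hm hi hk
  refine ⟨part1, fun ha hb => ?_⟩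
  have hi := h.isolated hm ha hb
  refine ⟨hi, le_antisymm ?_ (part1 hi)⟩
  obtain ⟨ρ, ⟨hn, hd⟩, hρ⟩ := ((ev_nice h.analytic hi).and (h.degAt hm ha hb)
      |>.and self_mem_nhdsWithin).exists
  exact Nat.sInf_le (hd.hasZeroOrder hρ hn hi.1)

end ZhangPaper
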